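/- arXiv:1904.03212 — 4 statements merged into one kernel-verified Lean document; each statement's English description precedes it below -/
import Mathlib

section
/- (Lemma 2) Let A, B ∈ Matrix (Fin n) (Fin n) ℂ have sectoral decompositions A = Rᴴ * D_A * R and B = Sᴴ * D_B * S with R, S invertible, D_A k k = exp(i α k), D_B k k = exp(i β k), where α, β : Fin n → ℝ are antitone (nonincreasing) and α k ∈ (θ₁, θ₁ + π), β k ∈ (θ₂, θ₂ + π) for all k, for some θ₁, θ₂ ∈ ℝ. Let λ : Fin n → ℂ be an enumeration with multiplicity of the eigenvalues of A * B (i.e., the characteristic polynomial of A*B equals ∏ k (X − C(λ k))). Then each λ k is nonzero, and letting γ k be the unique real in (θ₁ + θ₂, θ₁ + θ₂ + 2π) with λ k = ‖λ k‖ * exp(i γ k), the vector γ is majorized by α + β: for every Finset s ⊆ Fin n, ∑_{i∈s} γ i ≤ ∑_{i : (i : ℕ) < s.card} (α i + β i), and ∑_i γ i = ∑_i α i + ∑_i β i. -/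
open Matrix Polynomial
open scoped Real

section LogDet

open scoped ComplexOrder

variable {m : Type*} [Fintype m] [DecidableEq m]

/-- The sum of the principal logarithms of the eigenvalues, counted with multiplicity. -/
noncomputable def sumLogEigenvalues (M : Matrix m m ℂ) : ℂ :=
  (M.charpoly.roots.map Complex.log).sum

/-- A complex matrix whose numerical range lies in the open right half-plane. -/
def IsAccretive (M : Matrix m m ℂ) : Prop :=
  ∀ x : m → ℂ, x ≠ 0 → 0 < (star x ⬝ᵥ M *ᵥ x).re

theorem det_affine_eq_prod_roots (M : Matrix m m ℂ) (s : ℂ) :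
    det ((1 - s) • (1 : Matrix m m ℂ) + s • M) =
      (M.charpoly.roots.map fun z => 1 - s + s * z).prod := by
  by_cases hs : s = 0
  · simp [hs]
  have hsp : M.charpoly.Splits := IsAlgClosed.splits _
  have hcard : M.charpoly.roots.card = Fintype.card m := by
    rw [← hsp.natDegree_eq_card_roots, charpoly_natDegree_eq_dim]
  have h1 : (1 - s) • (1 : Matrix m m ℂ) + s • M =
      (-s) • (Matrix.scalar m (-(1 - s) / s) - M) := by
    ext i j
    obtain rfl | hij := eq_or_ne i j
    · simp; field_simp; ring
    · simp [hij]
  have h2 : M.charpoly.eval (-(1 - s) / s) =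
      (M.charpoly.roots.map fun z => -(1 - s) / s - z).prod := by
    conv_lhs => rw [hsp.eq_prod_roots_of_monic (charpoly_monic M), eval_multiset_prod]
    simp [Multiset.map_map]
  rw [h1, det_smul, ← eval_charpoly, h2, ← hcard, ← Multiset.prod_replicate, ← Multiset.map_const',
    ← Multiset.prod_map_mul]
  congr 1
  refine Multiset.map_congr rfl fun z _ => ?_
  field_simp
  ring

theorem Complex.sub_eq_sub_of_exp_eq {f g : ℝ → ℂ} (hf : Continuous f) (hg : Continuous g)
    (h : ∀ t, Complex.exp (f t) = Complex.exp (g t)) (a b : ℝ) :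
    f a - f b = g a - g b := by
  have key : (fun t => f t + (g b - f b)) = g := by
    refine Complex.isCoveringMap_exp.eq_of_comp_eq (by fun_prop) hg ?_ b (by ring)
    ext t
    simp [Complex.exp_add, Complex.exp_sub, h, Complex.exp_ne_zero]
  have := congrFun key a
  rw [← this]; ring

theorem exists_continuous_log {H : ℝ × ℝ → ℂ} (hH : Continuous H) (h0 : ∀ p, H p ≠ 0) :
    ∃ F : ℝ × ℝ → ℂ, Continuous F ∧ ∀ p, Complex.exp (F p) = H p := by
  obtain ⟨F, ⟨-, hF⟩, -⟩ := Complex.isCoveringMapOn_exp.existsUnique_continuousMap_lifts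
    ⟨H, hH⟩ (a₀ := 0) (Complex.exp_log (h0 0)) h0
  exact ⟨F, F.continuous, fun p => congrFun hF p⟩

/-- The retraction of the real line onto the unit interval. -/
def clamp (t : ℝ) : ℝ := max 0 (min 1 t)

theorem continuous_clamp : Continuous clamp := by unfold clamp; fun_prop

theorem clamp_nonneg (t : ℝ) : 0 ≤ clamp t := le_max_left _ _

theorem clamp_le_one (t : ℝ) : clamp t ≤ 1 := max_le zero_le_one (min_le_left _ _)

@[simp] theorem clamp_zero : clamp 0 = 0 := by simp [clamp]

@[simp] theorem clamp_one : clamp 1 = 1 := by simp [clamp]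

/-- The straight path from the identity to `M`. -/
noncomputable def affinePath (M : Matrix m m ℂ) (t : ℝ) : Matrix m m ℂ :=
  (1 - (clamp t : ℂ)) • (1 : Matrix m m ℂ) + (clamp t : ℂ) • M

theorem affinePath_of_one {l : Type*} [DecidableEq l] (t : ℝ) :
    affinePath (1 : Matrix l l ℂ) t = 1 := by
  rw [affinePath, ← add_smul]; simp

theorem continuous_affinePath {l : Type*} [DecidableEq l] (M : Matrix l l ℂ) :
    Continuous (affinePath M) := by
  have := continuous_clamp
  unfold affinePath
  fun_prop

@[simp] theorem affinePath_zero {l : Type*} [DecidableEq l] (M : Matrix l l ℂ) :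
    affinePath M 0 = 1 := by simp [affinePath]

@[simp] theorem affinePath_one {l : Type*} [DecidableEq l] (M : Matrix l l ℂ) :
    affinePath M 1 = M := by simp [affinePath]

theorem exists_continuous_log_det_affinePath {M : Matrix m m ℂ}
    (hM : ∀ t, (affinePath M t).det ≠ 0) :
    ∃ f : ℝ → ℂ, Continuous f ∧ (∀ t, Complex.exp (f t) = (affinePath M t).det) ∧
      f 0 = 0 ∧ f 1 = sumLogEigenvalues M := by
  have hdet (t : ℝ) := det_affine_eq_prod_roots M (clamp t)
  have hne (t : ℝ) (z : ℂ) (hz : z ∈ M.charpoly.roots) :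
      1 - (clamp t : ℂ) + clamp t * z ≠ 0 := by
    intro h0
    refine hM t ?_
    rw [affinePath, hdet, Multiset.prod_eq_zero_iff, Multiset.mem_map]
    exact ⟨z, hz, h0⟩
  have hslit (z : ℂ) (hz : z ∈ M.charpoly.roots) : z ∈ Complex.slitPlane := by
    rw [Complex.mem_slitPlane_iff]
    by_contra! hcon
    obtain ⟨hre, him⟩ := hcon
    have hz' : z = (z.re : ℂ) := Complex.ext (by simp) (by simp [him])
    have hpos : (0 : ℝ) < 1 - z.re := by linarith
    have hc : clamp (1 / (1 - z.re)) = 1 / (1 - z.re) := by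
      rw [clamp, min_eq_right, max_eq_right]
      · positivity
      · rw [div_le_one hpos]; linarith
    refine hne (1 / (1 - z.re)) z hz ?_
    rw [hc, hz']
    simp only [Complex.ofReal_re]
    norm_cast
    field_simp
    ring
  have hslit' (t : ℝ) (z : ℂ) (hz : z ∈ M.charpoly.roots) :
      1 - (clamp t : ℂ) + clamp t * z ∈ Complex.slitPlane := by
    have h := hslit z hz
    rw [Complex.mem_slitPlane_iff] at h ⊢
    have h0 := clamp_nonneg t
    have h1 := clamp_le_one t
    have hre : (1 - (clamp t : ℂ) + clamp t * z).re = 1 - clamp t + clamp t * z.re := by simp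
    have him : (1 - (clamp t : ℂ) + clamp t * z).im = clamp t * z.im := by simp
    rw [hre, him]
    by_cases ht : clamp t = 0
    · left; simp [ht]
    · rcases h with h | h
      · left
        have : 0 < clamp t * z.re := mul_pos (lt_of_le_of_ne h0 (Ne.symm ht)) h
        linarith
      · right; exact mul_ne_zero ht h
  refine ⟨fun t =>
      (M.charpoly.roots.map fun z => Complex.log (1 - (clamp t : ℂ) + clamp t * z)).sum,
    ?_, fun t => ?_, ?_, ?_⟩
  · refine continuous_multiset_sum _ fun z hz => ?_
    have := continuous_clamp
    exact Continuous.clog (by fun_prop) fun t => hslit' t z hz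
  · rw [Complex.exp_multiset_sum, Multiset.map_map, affinePath, hdet]
    congr 1
    exact Multiset.map_congr rfl fun z hz => Complex.exp_log (hne t z hz)
  · simp
  · simp [sumLogEigenvalues]

theorem sumLogEigenvalues_mul_of_affinePath {A B : Matrix m m ℂ}
    (h : ∀ s t, (affinePath (affinePath A t * affinePath B t) s).det ≠ 0) :
    sumLogEigenvalues (A * B) = sumLogEigenvalues A + sumLogEigenvalues B := by
  have hAB (t : ℝ) : (affinePath A t).det * (affinePath B t).det ≠ 0 := by
    have := h 1 t
    rwa [affinePath_one, det_mul] at this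
  obtain ⟨f, hf, hfe, hf0, hf1⟩ := exists_continuous_log_det_affinePath
    fun t => left_ne_zero_of_mul (hAB t)
  obtain ⟨g, hg, hge, hg0, hg1⟩ := exists_continuous_log_det_affinePath
    fun t => right_ne_zero_of_mul (hAB t)
  obtain ⟨k, hk, hke, hk0, hk1⟩ := exists_continuous_log_det_affinePath (M := A * B)
    fun s => by simpa using h s 1
  obtain ⟨F, hF, hFe⟩ := exists_continuous_log
    (H := fun p : ℝ × ℝ => (affinePath (affinePath A p.2 * affinePath B p.2) p.1).det)
    (by
      have h1 := continuous_clamp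
      have h2 := continuous_affinePath A
      have h3 := continuous_affinePath B
      unfold affinePath at h2 h3 ⊢
      fun_prop)
    (fun p => h p.1 p.2)
  have e1 := Complex.sub_eq_sub_of_exp_eq (f := fun s => F (s, 1)) (g := k)
    (by fun_prop) hk (fun s => by simp [hFe, hke]) 1 0
  have e2 := Complex.sub_eq_sub_of_exp_eq (f := fun s => F (s, 0)) (g := fun _ => 0)
    (by fun_prop) continuous_const (fun s => by simp [hFe, affinePath_of_one]) 1 0
  have e3 := Complex.sub_eq_sub_of_exp_eq (f := fun t => F (0, t)) (g := fun _ => 0)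
    (by fun_prop) continuous_const (fun s => by simp [hFe]) 1 0
  have e4 := Complex.sub_eq_sub_of_exp_eq (f := fun t => F (1, t)) (g := fun t => f t + g t)
    (by fun_prop) (by fun_prop) (fun s => by simp [hFe, Complex.exp_add, hfe, hge]) 1 0
  simp only [hf0, hg0, hk0, hf1, hg1, hk1] at e1 e2 e3 e4
  linear_combination e4 + e2 - e3 - e1

theorem convex_combination_pos {a b t : ℝ} (ha : 0 < a) (hb : 0 < b) (h0 : 0 ≤ t)
    (h1 : t ≤ 1) : 0 < (1 - t) * a + t * b := by
  rcases h0.eq_or_lt with rfl | h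
  · simpa
  · exact add_pos_of_nonneg_of_pos (mul_nonneg (by linarith) ha.le) (mul_pos h hb)

theorem IsAccretive.affinePath {A : Matrix m m ℂ} (hA : IsAccretive A) (t : ℝ) :
    IsAccretive (affinePath A t) := by
  intro x hx
  have h1 : 0 < (star x ⬝ᵥ x).re := by
    have := dotProduct_star_self_pos_iff (v := star x) |>.2 (by simpa using hx)
    rw [star_star, dotProduct_comm] at this
    exact (Complex.pos_iff.1 this).1
  have h2 := hA x hx
  have h0 := clamp_nonneg t
  have h3 := clamp_le_one t
  have : (star x ⬝ᵥ _root_.affinePath A t *ᵥ x).re =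
      (1 - clamp t) * (star x ⬝ᵥ x).re + clamp t * (star x ⬝ᵥ A *ᵥ x).re := by
    simp only [_root_.affinePath, add_mulVec, smul_mulVec, one_mulVec, dotProduct_add,
      dotProduct_smul, smul_eq_mul, Complex.add_re, Complex.mul_re]
    simp
  rw [this]
  exact convex_combination_pos h1 h2 h0 h3

theorem IsAccretive.det_ne_zero {A : Matrix m m ℂ} (hA : IsAccretive A) : A.det ≠ 0 := by
  intro h
  obtain ⟨v, hv, hv0⟩ := exists_mulVec_eq_zero_iff.2 h
  simpa [hv0] using hA v hv

theorem IsAccretive.det_affinePath_mul_ne_zero {A B : Matrix m m ℂ} (hA : IsAccretive A)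
    (hB : IsAccretive B) (s : ℝ) : (_root_.affinePath (A * B) s).det ≠ 0 := by
  intro h
  obtain ⟨v, hv, hv0⟩ := exists_mulVec_eq_zero_iff.2 h
  have hdet : IsUnit A.det := isUnit_iff_ne_zero.2 hA.det_ne_zero
  obtain ⟨u, rfl⟩ : ∃ u, v = A *ᵥ u :=
    ⟨A⁻¹ *ᵥ v, by rw [mulVec_mulVec, mul_nonsing_inv _ hdet, one_mulVec]⟩
  have hu : u ≠ 0 := by rintro rfl; simp at hv
  have hinj : A *ᵥ ((1 - (clamp s : ℂ)) • u + (clamp s : ℂ) • (B *ᵥ (A *ᵥ u))) = 0 := by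
    rw [← hv0, _root_.affinePath]
    rw [add_mulVec, smul_mulVec, one_mulVec, smul_mulVec, mulVec_add, mulVec_smul, mulVec_smul,
      ← mulVec_mulVec]
  have h0 : (1 - (clamp s : ℂ)) • u + (clamp s : ℂ) • (B *ᵥ (A *ᵥ u)) = 0 := by
    by_contra hne
    exact hA.det_ne_zero (exists_mulVec_eq_zero_iff.1 ⟨_, hne, hinj⟩)
  have h1 : (1 - clamp s) * (star (A *ᵥ u) ⬝ᵥ u).re +
      clamp s * (star (A *ᵥ u) ⬝ᵥ B *ᵥ (A *ᵥ u)).re = 0 := by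
    have := congrArg (fun w => (star (A *ᵥ u) ⬝ᵥ w).re) h0
    simpa [dotProduct_add, dotProduct_smul] using this
  have h2 : (star (A *ᵥ u) ⬝ᵥ u).re = (star u ⬝ᵥ A *ᵥ u).re := by
    rw [← Complex.conj_re, ← Complex.star_def, star_dotProduct, star_star]
  have h3 := hA u hu
  have h4 := hB _ hv
  have h5 := clamp_nonneg s
  have h6 := clamp_le_one s
  rw [h2] at h1
  exact (convex_combination_pos h3 h4 h5 h6).ne' h1

theorem IsAccretive.sumLogEigenvalues_mul {A B : Matrix m m ℂ} (hA : IsAccretive A)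
    (hB : IsAccretive B) :
    sumLogEigenvalues (A * B) = sumLogEigenvalues A + sumLogEigenvalues B :=
  sumLogEigenvalues_mul_of_affinePath fun s t =>
    (hA.affinePath t).det_affinePath_mul_ne_zero (hB.affinePath t) s

end LogDet

section AngleSum

open scoped ComplexOrder

theorem IsAccretive.conjTranspose_mul_mul {m k : Type*} [Fintype m] [Fintype k]
    {C : Matrix m m ℂ} (hC : IsAccretive C)
    {X : Matrix m k ℂ} (hX : ∀ x, x ≠ 0 → X *ᵥ x ≠ 0) : IsAccretive (Xᴴ * C * X) := by
  intro x hx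
  have := hC _ (hX x hx)
  rwa [star_mulVec, ← dotProduct_mulVec, mulVec_mulVec, mulVec_mulVec] at this

theorem Matrix.PosDef.isAccretive {m : Type*} [Fintype m] {P : Matrix m m ℂ} (hP : P.PosDef) :
    IsAccretive P :=
  fun _ hx => (Complex.pos_iff.1 (hP.dotProduct_mulVec_pos hx)).1

variable {m : Type*} [Fintype m] [DecidableEq m]

theorem Matrix.PosDef.sumLogEigenvalues_im {P : Matrix m m ℂ} (hP : P.PosDef) :
    (sumLogEigenvalues P).im = 0 := by
  rw [sumLogEigenvalues, hP.1.roots_charpoly_eq_eigenvalues, Multiset.map_map]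
  change (∑ i, Complex.log (hP.1.eigenvalues i : ℂ)).im = 0
  rw [Complex.im_sum]
  refine Finset.sum_eq_zero fun i _ => ?_
  rw [Complex.log_im, Complex.arg_ofReal_of_nonneg (hP.eigenvalues_pos i).le]

theorem sumLogEigenvalues_diagonal (d : m → ℂ) :
    sumLogEigenvalues (diagonal d) = ∑ i, Complex.log (d i) := by
  rw [sumLogEigenvalues, charpoly_diagonal, roots_prod]
  · simp
  · simp [Finset.prod_ne_zero_iff, X_sub_C_ne_zero]

theorem IsAccretive.sumLogEigenvalues_congr_im {C G : Matrix m m ℂ} (hC : IsAccretive C)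
    (hG : IsUnit G) : (sumLogEigenvalues (Gᴴ * C * G)).im = (sumLogEigenvalues C).im := by
  have hP : (G * Gᴴ).PosDef := by
    have := (PosDef.one (n := m) (R := ℂ)).mul_mul_conjTranspose_same (B := G)
      (vecMul_injective_of_isUnit hG)
    simpa using this
  have : sumLogEigenvalues (Gᴴ * C * G) = sumLogEigenvalues (C * (G * Gᴴ)) := by
    rw [sumLogEigenvalues, Matrix.mul_assoc, charpoly_mul_comm, Matrix.mul_assoc]
    rfl
  rw [this, hC.sumLogEigenvalues_mul hP.isAccretive, Complex.add_im, hP.sumLogEigenvalues_im,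
    add_zero]

theorem Matrix.IsHermitian.exists_eq_mul_diagonal_mul {K : Matrix m m ℂ} (hK : K.IsHermitian) :
    ∃ V : Matrix m m ℂ, Vᴴ * V = 1 ∧
      K = V * diagonal (fun i => (hK.eigenvalues i : ℂ)) * Vᴴ :=
  ⟨hK.eigenvectorUnitary.1, Unitary.coe_star_mul_self hK.eigenvectorUnitary,
    hK.spectral_theorem⟩

theorem Matrix.PosDef.exists_conjTranspose_mul_mul_eq_one {H : Matrix m m ℂ} (hH : H.PosDef) :
    ∃ W : Matrix m m ℂ, IsUnit W ∧ Wᴴ * H * W = 1 := by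
  obtain ⟨U, hU, hspec⟩ := hH.1.exists_eq_mul_diagonal_mul
  have hpos := hH.eigenvalues_pos
  generalize hH.1.eigenvalues = μ at hspec hpos
  subst hspec
  set e : m → ℂ := fun i => (√(μ i) : ℂ)⁻¹
  have key : (U * diagonal e)ᴴ * (U * diagonal (fun i => (μ i : ℂ)) * Uᴴ) * (U * diagonal e) =
      1 := by
    have : (diagonal e)ᴴ * Uᴴ * (U * diagonal (fun i => (μ i : ℂ)) * Uᴴ) * (U * diagonal e) =
        (diagonal e)ᴴ * (Uᴴ * U) * diagonal (fun i => (μ i : ℂ)) * (Uᴴ * U) * diagonal e := by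
      simp only [Matrix.mul_assoc]
    rw [conjTranspose_mul, this, hU, Matrix.mul_one, Matrix.mul_one, diagonal_conjTranspose,
      diagonal_mul_diagonal, diagonal_mul_diagonal, ← diagonal_one]
    congr 1
    ext i
    have hsq : √(μ i) ≠ 0 := (Real.sqrt_pos.2 (hpos i)).ne'
    simp only [e, Pi.star_apply, Complex.star_def, map_inv₀, Complex.conj_ofReal]
    norm_cast
    field_simp
    rw [Real.sq_sqrt (hpos i).le]
  exact ⟨_, IsUnit.of_mul_eq_one_right _ key, key⟩

theorem IsAccretive.exists_eq_conjTranspose_mul_diagonal_mul {C : Matrix m m ℂ}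
    (hC : IsAccretive C) :
    ∃ (G : Matrix m m ℂ) (κ : m → ℝ), IsUnit G ∧
      C = Gᴴ * diagonal (fun i => 1 + (κ i : ℂ) * Complex.I) * G := by
  have hH : ((1 / 2 : ℂ) • (C + Cᴴ)).PosDef := by
    refine .of_dotProduct_mulVec_pos ?_ fun x hx => ?_
    · rw [IsHermitian, conjTranspose_smul, conjTranspose_add, conjTranspose_conjTranspose, add_comm]
      simp
    · have h1 : star x ⬝ᵥ Cᴴ *ᵥ x = star (star x ⬝ᵥ C *ᵥ x) := by
        rw [star_dotProduct, star_mulVec, conjTranspose_conjTranspose, ← dotProduct_mulVec]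
      rw [smul_mulVec, add_mulVec, dotProduct_smul, dotProduct_add, h1, Complex.star_def,
        Complex.add_conj, smul_eq_mul]
      have := hC x hx
      norm_cast
      rw [show (1 / 2 : ℂ) = ((1 / 2 : ℝ) : ℂ) by norm_num]
      norm_cast
      linarith
  obtain ⟨W, hW, hW1⟩ := hH.exists_conjTranspose_mul_mul_eq_one
  set N := Wᴴ * C * W with hN
  have hNN : Nᴴ = 2 - N := by
    have h2 : (1 / 2 : ℂ) • (N + Nᴴ) = 1 := by
      rw [← hW1, hN]
      simp only [conjTranspose_mul, conjTranspose_conjTranspose, Matrix.mul_add, Matrix.add_mul,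
        Matrix.mul_smul, Matrix.smul_mul, Matrix.mul_assoc]
    have h3 : N + Nᴴ = 2 := by
      rw [← one_add_one_eq_two, ← h2, ← add_smul]
      norm_num
    exact eq_sub_of_add_eq' h3
  have hK : (-Complex.I • (N - 1)).IsHermitian := by
    rw [IsHermitian, conjTranspose_smul, conjTranspose_sub, hNN]
    simp only [star_neg, Complex.star_def, Complex.conj_I, neg_neg, conjTranspose_one, neg_smul]
    rw [← smul_neg]
    congr 1
    rw [← one_add_one_eq_two]
    abel
  obtain ⟨V, hV, hspec⟩ := hK.exists_eq_mul_diagonal_mul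
  generalize hK.eigenvalues = μ at hspec
  have hN2 : N = V * diagonal (fun i => 1 + (μ i : ℂ) * Complex.I) * Vᴴ := by
    have h1 : N = 1 + Complex.I • (-Complex.I • (N - 1)) := by
      rw [smul_smul]; simp
    have h2 : diagonal (fun i => 1 + (μ i : ℂ) * Complex.I) =
        1 + Complex.I • diagonal (fun i => (μ i : ℂ)) := by
      rw [← diagonal_one, ← diagonal_smul, diagonal_add]
      congr 1
      ext i
      simp [mul_comm]
    rw [h2, h1, hspec, Matrix.mul_add, Matrix.add_mul, Matrix.mul_one,
      mul_eq_one_comm.1 hV, Matrix.mul_smul, Matrix.smul_mul]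
  have hWdet : IsUnit W.det := (isUnit_iff_isUnit_det _).1 hW
  refine ⟨Vᴴ * W⁻¹, μ, ?_, ?_⟩
  · exact (IsUnit.of_mul_eq_one _ hV).mul ((isUnit_nonsing_inv_iff).2 hW)
  · have : C = (W⁻¹)ᴴ * N * W⁻¹ := by
      have h1 : (W⁻¹)ᴴ * Wᴴ = 1 := by
        rw [← conjTranspose_mul, mul_nonsing_inv _ hWdet, conjTranspose_one]
      rw [hN]
      simp only [Matrix.mul_assoc]
      rw [mul_nonsing_inv _ hWdet, Matrix.mul_one, ← Matrix.mul_assoc, h1, Matrix.one_mul]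
    rw [this, hN2]
    simp only [conjTranspose_mul, conjTranspose_conjTranspose, Matrix.mul_assoc]

end AngleSum

section Compression

theorem star_dotProduct_conjTranspose_mul_diagonal_mul {m k : Type*} [Fintype m] [DecidableEq m]
    [Fintype k] (Y : Matrix m k ℂ) (d : m → ℂ) (x : k → ℂ) :
    star x ⬝ᵥ (Yᴴ * diagonal d * Y) *ᵥ x = ∑ i, (Complex.normSq ((Y *ᵥ x) i) : ℂ) * d i := by
  rw [← mulVec_mulVec, ← mulVec_mulVec, dotProduct_mulVec, ← star_mulVec, dotProduct]
  refine Finset.sum_congr rfl fun i _ => ?_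
  rw [mulVec_diagonal, Complex.normSq_eq_conj_mul_self, Pi.star_apply, Complex.star_def]
  ring

theorem isAccretive_diagonal {m : Type*} [Fintype m] [DecidableEq m] {d : m → ℂ}
    (hd : ∀ i, 0 < (d i).re) : IsAccretive (diagonal d) := by
  intro x hx
  obtain ⟨j, hj⟩ := Function.ne_iff.1 hx
  have := star_dotProduct_conjTranspose_mul_diagonal_mul 1 d x
  rw [conjTranspose_one, Matrix.one_mul, Matrix.mul_one, one_mulVec] at this
  rw [this, Complex.re_sum]
  simp only [Complex.re_ofReal_mul]
  exact Finset.sum_pos' (fun i _ => mul_nonneg (Complex.normSq_nonneg _) (hd i).le)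
    ⟨j, Finset.mem_univ _, mul_pos (Complex.normSq_pos.2 hj) (hd j)⟩

theorem exp_mul_I_re_pos {x : ℝ} (hx : x ∈ Set.Ioo (-(π / 2)) (π / 2)) :
    0 < (Complex.exp ((x : ℂ) * Complex.I)).re := by
  rw [Complex.exp_ofReal_mul_I_re]
  exact Real.cos_pos_of_mem_Ioo hx

theorem log_exp_mul_I_im {x : ℝ} (hx : x ∈ Set.Ioo (-(π / 2)) (π / 2)) :
    (Complex.log (Complex.exp ((x : ℂ) * Complex.I))).im = x := by
  have := Real.pi_pos
  rw [Complex.log_exp] <;> simp <;> linarith [hx.1, hx.2]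

/-- A sorted form of the diagonalization of an accretive matrix by congruence. -/
theorem IsAccretive.exists_antitone_eq {k : ℕ} {C : Matrix (Fin k) (Fin k) ℂ}
    (hC : IsAccretive C) :
    ∃ (G : Matrix (Fin k) (Fin k) ℂ) (κ : Fin k → ℝ), Antitone κ ∧ IsUnit G ∧
      C = Gᴴ * diagonal (fun i => 1 + (κ i : ℂ) * Complex.I) * G := by
  obtain ⟨G, κ, hG, hCG⟩ := hC.exists_eq_conjTranspose_mul_diagonal_mul
  let σ := Tuple.sort fun i => -κ i
  have hσ : Monotone ((fun i => -κ i) ∘ σ) := Tuple.monotone_sort _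
  refine ⟨G.submatrix σ id, κ ∘ σ, fun i j hij => by simpa using hσ hij, ?_, ?_⟩
  · rw [isUnit_iff_isUnit_det, det_permute]
    exact (((Equiv.Perm.sign σ).isUnit.map (Int.castRingHom ℂ))).mul
      ((isUnit_iff_isUnit_det _).1 hG)
  · have h1 : diagonal (fun i => 1 + ((κ ∘ σ) i : ℂ) * Complex.I) =
        (diagonal (fun i => 1 + (κ i : ℂ) * Complex.I)).submatrix σ σ := by
      rw [submatrix_diagonal_equiv]; rfl
    rw [h1, conjTranspose_submatrix, submatrix_mul_equiv, submatrix_mul_equiv, ← hCG]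
    simp

theorem le_tan_of_conjTranspose_mul_diagonal_mul_eq {n k : ℕ} (hkn : k ≤ n) {β : Fin n → ℝ}
    (hβ : Antitone β) (hβmem : ∀ i, β i ∈ Set.Ioo (-(π / 2)) (π / 2))
    {Y : Matrix (Fin n) (Fin k) ℂ} {G : Matrix (Fin k) (Fin k) ℂ} {κ : Fin k → ℝ}
    (hκ : Antitone κ) (hG : IsUnit G)
    (h : Yᴴ * diagonal (fun i => Complex.exp ((β i : ℂ) * Complex.I)) * Y =
      Gᴴ * diagonal (fun i => 1 + (κ i : ℂ) * Complex.I) * G) (j : Fin k) :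
    κ j ≤ Real.tan (β (Fin.castLE hkn j)) := by
  obtain ⟨x, hx, hTx⟩ : ∃ x, x ≠ 0 ∧ (Matrix.of fun l => if j < l then G l else
      if l < j then Y (Fin.castLE hkn l) else 0) *ᵥ x = 0 := by
    refine exists_mulVec_eq_zero_iff.2 (det_eq_zero_of_row_eq_zero j fun i => ?_)
    simp
  have hGx (l : Fin k) (hl : j < l) : (G *ᵥ x) l = 0 := by
    have := congrFun hTx l
    simpa [mulVec, hl] using this
  have hYx (i : Fin n) (hi : i < Fin.castLE hkn j) : (Y *ᵥ x) i = 0 := by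
    have hij : (i : ℕ) < j := hi
    have := congrFun hTx ⟨i, hij.trans j.2⟩
    have h1 : (⟨i, hij.trans j.2⟩ : Fin k) < j := hij
    simpa [mulVec, h1, h1.not_gt] using this
  have hq := congrArg (fun M => star x ⬝ᵥ M *ᵥ x) h
  simp only [star_dotProduct_conjTranspose_mul_diagonal_mul] at hq
  have hre := congrArg Complex.re hq
  have him := congrArg Complex.im hq
  simp only [Complex.re_sum, Complex.im_sum, Complex.re_ofReal_mul, Complex.im_ofReal_mul,
    Complex.exp_ofReal_mul_I_re, Complex.exp_ofReal_mul_I_im] at hre him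
  simp only [Complex.add_re, Complex.add_im, Complex.one_re, Complex.one_im, Complex.re_ofReal_mul,
    Complex.im_ofReal_mul, Complex.I_re, Complex.I_im, mul_zero, add_zero, zero_add, mul_one]
    at hre him
  have hGx0 : G *ᵥ x ≠ 0 := fun h0 => hx (mulVec_injective_of_isUnit hG (by simpa using h0))
  obtain ⟨l, hl⟩ := Function.ne_iff.1 hGx0
  have hpos : 0 < ∑ i, Complex.normSq ((G *ᵥ x) i) :=
    Finset.sum_pos' (fun i _ => Complex.normSq_nonneg _)
      ⟨l, Finset.mem_univ _, Complex.normSq_pos.2 hl⟩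
  have hlow : κ j * ∑ i, Complex.normSq ((G *ᵥ x) i) ≤
      ∑ i, Complex.normSq ((G *ᵥ x) i) * κ i := by
    rw [Finset.mul_sum]
    refine Finset.sum_le_sum fun i _ => ?_
    rcases lt_or_ge j i with hi | hi
    · simp [hGx i hi]
    · nlinarith [hκ hi, Complex.normSq_nonneg ((G *ᵥ x) i)]
  have hup : ∑ i, Complex.normSq ((Y *ᵥ x) i) * Real.sin (β i) ≤
      Real.tan (β (Fin.castLE hkn j)) * ∑ i, Complex.normSq ((Y *ᵥ x) i) * Real.cos (β i) := by
    rw [Finset.mul_sum]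
    refine Finset.sum_le_sum fun i _ => ?_
    rcases lt_or_ge i (Fin.castLE hkn j) with hi | hi
    · simp [hYx i hi]
    · have hc := Real.cos_pos_of_mem_Ioo (hβmem i)
      have ht : Real.tan (β i) ≤ Real.tan (β (Fin.castLE hkn j)) :=
        Real.strictMonoOn_tan.monotoneOn (hβmem i) (hβmem _) (hβ hi)
      have hs : Real.sin (β i) = Real.tan (β i) * Real.cos (β i) :=
        (Real.tan_mul_cos hc.ne').symm
      have := mul_nonneg (Complex.normSq_nonneg ((Y *ᵥ x) i)) hc.le
      rw [hs]
      nlinarith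
  rw [hre, him] at hup
  exact le_of_mul_le_mul_right (hlow.trans hup) hpos

theorem sumLogEigenvalues_compression_im_le {n k : ℕ} (hkn : k ≤ n) {β : Fin n → ℝ}
    (hβ : Antitone β) (hβmem : ∀ i, β i ∈ Set.Ioo (-(π / 2)) (π / 2))
    {Y : Matrix (Fin n) (Fin k) ℂ} (hY : ∀ x, x ≠ 0 → Y *ᵥ x ≠ 0) :
    (sumLogEigenvalues
      (Yᴴ * diagonal (fun i => Complex.exp ((β i : ℂ) * Complex.I)) * Y)).im ≤
      ∑ j, β (Fin.castLE hkn j) := by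
  have hC := (isAccretive_diagonal fun i => exp_mul_I_re_pos (hβmem i)).conjTranspose_mul_mul hY
  obtain ⟨G, κ, hκ, hG, h⟩ := hC.exists_antitone_eq
  have hd : IsAccretive (diagonal fun i => 1 + (κ i : ℂ) * Complex.I) :=
    isAccretive_diagonal fun i => by simp
  rw [h, hd.sumLogEigenvalues_congr_im hG, sumLogEigenvalues_diagonal, Complex.im_sum]
  refine Finset.sum_le_sum fun j _ => ?_
  have hj := le_tan_of_conjTranspose_mul_diagonal_mul_eq hkn hβ hβmem hκ hG h j
  have harg : (Complex.log (1 + (κ j : ℂ) * Complex.I)).im = Real.arctan (κ j) := by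
    rw [Complex.log_im, Complex.arg_of_re_nonneg (by simp), Real.arctan_eq_arcsin]
    simp [Complex.norm_def, Complex.normSq_apply, sq]
  rw [harg, ← Real.arctan_tan (hβmem (Fin.castLE hkn j)).1 (hβmem _).2]
  exact Real.arctan_strictMono.monotone hj

end Compression

section Invariant

theorem LinearMap.charpoly_eq_mul_X_sub_C_of_range_sub_le {K V : Type*} [Field K] [Infinite K]
    [AddCommGroup V] [Module K V] [FiniteDimensional K V] (f : V →ₗ[K] V) (μ : K)
    (φ : V →ₗ[K] K) (hφ : φ ≠ 0) (hf : LinearMap.range (f - algebraMap K _ μ) ≤ LinearMap.ker φ)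
    (hW : LinearMap.ker φ ≤ (LinearMap.ker φ).comap f) :
    f.charpoly = (f.restrict hW).charpoly * (X - C μ) := by
  refine Polynomial.funext fun t => ?_
  have hT : LinearMap.ker φ ≤ (LinearMap.ker φ).comap (algebraMap K (Module.End K V) t - f) := by
    intro x hx
    have := hW hx
    simp only [Submodule.mem_comap, LinearMap.mem_ker, LinearMap.sub_apply, map_sub,
      Module.algebraMap_end_apply, map_smul] at *
    simp [hx, this]
  have hr : (algebraMap K (Module.End K V) t - f).restrict hT
      = algebraMap K (Module.End K _) t - f.restrict hW := by
    ext x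
    simp [LinearMap.restrict_apply]
  have hq : (LinearMap.ker φ).mapQ (LinearMap.ker φ) (algebraMap K (Module.End K V) t - f) hT
      = (t - μ) • LinearMap.id := by
    refine Submodule.linearMap_qext _ (LinearMap.ext fun x => ?_)
    have h := hf ⟨x, rfl⟩
    simp only [LinearMap.coe_comp, Function.comp_apply, Submodule.mkQ_apply, Submodule.mapQ_apply,
      LinearMap.smul_apply, LinearMap.id_apply, ← Submodule.Quotient.mk_smul]
    rw [Submodule.Quotient.eq]
    have e : (algebraMap K (Module.End K V) t - f) x - (t - μ) • x
        = -((f - algebraMap K (Module.End K V) μ) x) := by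
      simp only [LinearMap.sub_apply, Module.algebraMap_end_apply]
      module
    rw [e]
    exact neg_mem h
  have hdim : Module.finrank K (V ⧸ LinearMap.ker φ) = 1 := by
    rw [(φ.quotKerEquivRange).finrank_eq, LinearMap.range_eq_top.2 (LinearMap.surjective hφ)]
    simp
  rw [LinearMap.eval_charpoly, LinearMap.det_eq_det_mul_det _ _ hT, hr, hq, eval_mul,
    LinearMap.eval_charpoly, LinearMap.det_smul, hdim]
  simp

theorem LinearMap.exists_injective_comp_eq_of_le_roots_charpoly {K : Type*} [Field K]
    [IsAlgClosed K] (d : ℕ) {V : Type*} [AddCommGroup V] [Module K V]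
    [FiniteDimensional K V] (hd : Module.finrank K V = d) (f : V →ₗ[K] V) (t : Multiset K)
    (ht : t ≤ f.charpoly.roots) :
    ∃ (P : (Fin t.card → K) →ₗ[K] V) (L : Matrix (Fin t.card) (Fin t.card) K),
      Function.Injective P ∧ f ∘ₗ P = P ∘ₗ L.toLin' ∧ L.charpoly.roots = t := by
  induction d using Nat.strong_induction_on generalizing V with
  | _ d ih =>
  rcases ht.eq_or_lt with rfl | hlt
  · have hcard : Module.finrank K V = f.charpoly.roots.card := by
      rw [← LinearMap.charpoly_natDegree f, IsAlgClosed.card_roots_eq_natDegree]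
    let b := Module.finBasisOfFinrankEq K V hcard
    refine ⟨b.equivFun.symm.toLinearMap, LinearMap.toMatrix b b f, b.equivFun.symm.injective,
      ?_, by rw [LinearMap.charpoly_toMatrix]⟩
    ext x
    simp [LinearMap.toMatrix_apply]
  obtain ⟨μ, hμ⟩ := Multiset.lt_iff_cons_le.1 hlt
  have hroot : μ ∈ f.charpoly.roots := Multiset.mem_of_le hμ (Multiset.mem_cons_self _ _)
  have hrange : LinearMap.range (f - algebraMap K (Module.End K V) μ) < ⊤ := by
    refine lt_top_iff_ne_top.2 fun h => ?_
    have hdet : LinearMap.det (algebraMap K (Module.End K V) μ - f) = 0 := by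
      rw [← LinearMap.eval_charpoly]
      exact (Polynomial.mem_roots'.1 hroot).2
    have := LinearMap.range_lt_top_of_det_eq_zero hdet
    rw [← neg_sub, LinearMap.range_neg] at h
    exact this.ne h
  obtain ⟨φ, hφ, hle⟩ := Submodule.exists_le_ker_of_lt_top _ hrange
  have hW : LinearMap.ker φ ≤ (LinearMap.ker φ).comap f := by
    intro x hx
    have h := hle ⟨x, rfl⟩
    rw [LinearMap.mem_ker, LinearMap.sub_apply, map_sub, Module.algebraMap_end_apply, map_smul,
      LinearMap.mem_ker.1 hx, smul_zero, sub_zero] at h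
    exact h
  have hchar := f.charpoly_eq_mul_X_sub_C_of_range_sub_le μ φ hφ hle hW
  have hroots : f.charpoly.roots = μ ::ₘ (f.restrict hW).charpoly.roots := by
    rw [hchar, roots_mul (mul_ne_zero (LinearMap.charpoly_monic _).ne_zero (X_sub_C_ne_zero μ)),
      roots_X_sub_C, add_comm, Multiset.singleton_add]
  rw [hroots, Multiset.cons_le_cons_iff] at hμ
  have hlt' : Module.finrank K (LinearMap.ker φ) < d := by
    rw [← hd]
    refine Submodule.finrank_lt fun h => hφ (LinearMap.ker_eq_top.1 h)
  obtain ⟨P, L, hP, hPL, hL⟩ := ih _ hlt' rfl (f.restrict hW) hμ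
  refine ⟨(LinearMap.ker φ).subtype ∘ₗ P, L, ?_, ?_, hL⟩
  · exact (LinearMap.ker φ).subtype_injective.comp hP
  · rw [LinearMap.comp_assoc, ← hPL]
    rfl

theorem Matrix.exists_mul_eq_mul_of_le_roots_charpoly {K : Type*} [Field K] [IsAlgClosed K]
    {n : Type*} [Fintype n] [DecidableEq n] (M : Matrix n n K) (t : Multiset K)
    (ht : t ≤ M.charpoly.roots) :
    ∃ (Y : Matrix n (Fin t.card) K) (L : Matrix (Fin t.card) (Fin t.card) K),
      (∀ x, x ≠ 0 → Y *ᵥ x ≠ 0) ∧ M * Y = Y * L ∧ L.charpoly.roots = t := by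
  rw [← Matrix.charpoly_toLin'] at ht
  obtain ⟨P, L, hP, hPL, hL⟩ :=
    LinearMap.exists_injective_comp_eq_of_le_roots_charpoly _ rfl M.toLin' t ht
  refine ⟨LinearMap.toMatrix' P, L, fun x hx h => hx (hP ?_), ?_, hL⟩
  · rw [map_zero, ← h, ← Matrix.toLin'_apply, Matrix.toLin'_toMatrix']
  · simpa [LinearMap.toMatrix'_comp] using congrArg LinearMap.toMatrix' hPL

theorem Matrix.roots_charpoly_smul {K : Type*} [Field K] [IsAlgClosed K]
    {n : Type*} [Fintype n] [DecidableEq n] (c : K) (hc : c ≠ 0) (M : Matrix n n K) :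
    (c • M).charpoly.roots = M.charpoly.roots.map (c * ·) := by
  have h : (c • M).charpoly = (M.charpoly.roots.map fun a => X - C (c * a)).prod := by
    refine Polynomial.funext fun t => ?_
    have e : (scalar n) t - c • M = c • ((scalar n) (c⁻¹ * t) - M) := by
      ext i j
      by_cases hij : i = j
      · subst hij
        simp [mul_sub, hc]
      · simp [hij]
    have hcard : M.charpoly.roots.card = Fintype.card n := by
      rw [← charpoly_natDegree_eq_dim M, IsAlgClosed.card_roots_eq_natDegree]
    rw [eval_charpoly, e, det_smul, ← eval_charpoly, ← hcard,
      (IsAlgClosed.splits _).eval_eq_prod_roots_of_monic (charpoly_monic M),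
      eval_multiset_prod, Multiset.map_map]
    generalize M.charpoly.roots = r
    induction r using Multiset.induction_on with
    | empty => simp
    | cons a r ih =>
      rw [Multiset.card_cons, Multiset.map_cons, Multiset.map_cons, Multiset.prod_cons,
        Multiset.prod_cons, ← ih, Function.comp_apply, eval_sub, eval_X, eval_C]
      have hca : t - c * a = c * (c⁻¹ * t - a) := by rw [mul_sub, mul_inv_cancel_left₀ hc]
      rw [hca]
      ring
  rw [h]
  have := roots_multiset_prod_X_sub_C (M.charpoly.roots.map (c * ·))
  rwa [Multiset.map_map] at this

end Invariant

section Majorization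

variable {n : ℕ} {α β : Fin n → ℝ} {R S : Matrix (Fin n) (Fin n) ℂ}

theorem isAccretive_diagonal_exp_mul_I (hα : ∀ i, α i ∈ Set.Ioo (-(π / 2)) (π / 2)) :
    IsAccretive (diagonal fun i => Complex.exp ((α i : ℂ) * Complex.I)) :=
  isAccretive_diagonal fun i => exp_mul_I_re_pos (hα i)

theorem conjTranspose_diagonal_exp_mul_I_mul_self (α : Fin n → ℝ) :
    (diagonal fun i => Complex.exp ((α i : ℂ) * Complex.I))ᴴ *
      (diagonal fun i => Complex.exp ((α i : ℂ) * Complex.I)) = 1 := by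
  rw [diagonal_conjTranspose, diagonal_mul_diagonal, ← diagonal_one]
  congr 1
  funext i
  rw [Pi.star_apply, Complex.star_def, ← Complex.exp_conj, ← Complex.exp_add]
  simp

theorem sumLogEigenvalues_sectoral_im (hα : ∀ i, α i ∈ Set.Ioo (-(π / 2)) (π / 2))
    (hR : IsUnit R) :
    (sumLogEigenvalues
      (Rᴴ * (diagonal fun i => Complex.exp ((α i : ℂ) * Complex.I)) * R)).im = ∑ i, α i := by
  rw [(isAccretive_diagonal_exp_mul_I hα).sumLogEigenvalues_congr_im hR,
    sumLogEigenvalues_diagonal, Complex.im_sum]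
  exact Finset.sum_congr rfl fun i _ => log_exp_mul_I_im (hα i)

theorem mulVec_ne_zero_of_isUnit {m : Type*} [Fintype m] [DecidableEq m] {G : Matrix m m ℂ}
    (hG : IsUnit G) {x : m → ℂ} (hx : x ≠ 0) : G *ᵥ x ≠ 0 := by
  intro h
  refine hx (Matrix.mulVec_injective_of_isUnit hG ?_)
  rw [h, mulVec_zero]

theorem isAccretive_sectoral (hα : ∀ i, α i ∈ Set.Ioo (-(π / 2)) (π / 2)) (hR : IsUnit R) :
    IsAccretive (Rᴴ * (diagonal fun i => Complex.exp ((α i : ℂ) * Complex.I)) * R) :=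
  (isAccretive_diagonal_exp_mul_I hα).conjTranspose_mul_mul
    fun _ hx => mulVec_ne_zero_of_isUnit hR hx

theorem sum_log_im_of_sectoral_mul (hα : ∀ i, α i ∈ Set.Ioo (-(π / 2)) (π / 2))
    (hβ : ∀ i, β i ∈ Set.Ioo (-(π / 2)) (π / 2)) (hR : IsUnit R) (hS : IsUnit S) :
    (sumLogEigenvalues
      ((Rᴴ * (diagonal fun i => Complex.exp ((α i : ℂ) * Complex.I)) * R) *
        (Sᴴ * (diagonal fun i => Complex.exp ((β i : ℂ) * Complex.I)) * S))).im
      = ∑ i, α i + ∑ i, β i := by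
  rw [(isAccretive_sectoral hα hR).sumLogEigenvalues_mul (isAccretive_sectoral hβ hS),
    Complex.add_im, sumLogEigenvalues_sectoral_im hα hR, sumLogEigenvalues_sectoral_im hβ hS]

theorem sum_log_im_le_of_sectoral_mul (hα : Antitone α) (hβ : Antitone β)
    (hαmem : ∀ i, α i ∈ Set.Ioo (-(π / 2)) (π / 2))
    (hβmem : ∀ i, β i ∈ Set.Ioo (-(π / 2)) (π / 2)) (hR : IsUnit R) (hS : IsUnit S)
    {t : Multiset ℂ}
    (ht : t ≤ ((Rᴴ * (diagonal fun i => Complex.exp ((α i : ℂ) * Complex.I)) * R) *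
        (Sᴴ * (diagonal fun i => Complex.exp ((β i : ℂ) * Complex.I)) * S)).charpoly.roots)
    (hk : t.card ≤ n) :
    (t.map Complex.log).sum.im ≤
      ∑ j : Fin t.card, (α (Fin.castLE hk j) + β (Fin.castLE hk j)) := by
  set DA : Matrix (Fin n) (Fin n) ℂ := diagonal fun i => Complex.exp ((α i : ℂ) * Complex.I)
    with hDA
  set DB : Matrix (Fin n) (Fin n) ℂ := diagonal fun i => Complex.exp ((β i : ℂ) * Complex.I)
    with hDB
  obtain ⟨Y, L, hY, hYL, hL⟩ := exists_mul_eq_mul_of_le_roots_charpoly _ t ht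
  have hRdet := (isUnit_iff_isUnit_det R).1 hR
  have hRR : R⁻¹ * R = 1 := nonsing_inv_mul R hRdet
  have hRR' : R * R⁻¹ = 1 := mul_nonsing_inv R hRdet
  have hRH : (R⁻¹)ᴴ * Rᴴ = 1 := by rw [← conjTranspose_mul, hRR', conjTranspose_one]
  have hDD : DAᴴ * DA = 1 := conjTranspose_diagonal_exp_mul_I_mul_self α
  -- `E` is the compression of the inverse of the left factor
  set W := (R⁻¹)ᴴ * Y with hW
  set C := (S * Y)ᴴ * DB * (S * Y) with hC
  set E := Wᴴ * DAᴴ * W with hE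
  have hWinj : ∀ x, x ≠ 0 → W *ᵥ x ≠ 0 := by
    intro x hx
    rw [hW, ← mulVec_mulVec]
    refine mulVec_ne_zero_of_isUnit ?_ (hY x hx)
    exact isUnit_conjTranspose _ |>.2 (isUnit_nonsing_inv_iff.2 hR)
  have hCE : C = E * L := by
    have h1 : Wᴴ * DAᴴ * (R⁻¹)ᴴ * ((Rᴴ * DA * R) * (Sᴴ * DB * S) * Y) =
        Wᴴ * DAᴴ * (R⁻¹)ᴴ * (Y * L) := by rw [hYL]
    have h2 : Wᴴ * DAᴴ * (R⁻¹)ᴴ * ((Rᴴ * DA * R) * (Sᴴ * DB * S) * Y) = C := by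
      calc _ = Wᴴ * (DAᴴ * (((R⁻¹)ᴴ * Rᴴ) * DA)) * R * (Sᴴ * DB * S) * Y := by
            simp only [Matrix.mul_assoc]
        _ = Yᴴ * (R⁻¹ * R) * (Sᴴ * DB * S) * Y := by
            rw [hRH, Matrix.one_mul, hDD, hW, conjTranspose_mul, conjTranspose_conjTranspose]
            simp only [Matrix.mul_assoc, Matrix.one_mul]
        _ = C := by
            rw [hRR, hC, conjTranspose_mul]
            simp only [Matrix.mul_assoc, Matrix.one_mul]
    rw [← h2, h1, hE, hW]
    simp only [Matrix.mul_assoc]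
  have hEH : Eᴴ = Wᴴ * DA * W := by
    rw [hE]
    simp only [conjTranspose_mul, conjTranspose_conjTranspose, Matrix.mul_assoc]
  have hEHacc : IsAccretive Eᴴ := by
    rw [hEH]
    exact (isAccretive_diagonal_exp_mul_I hαmem).conjTranspose_mul_mul hWinj
  have hEunit : IsUnit E := by
    rw [← isUnit_conjTranspose, isUnit_iff_isUnit_det]
    exact hEHacc.det_ne_zero.isUnit
  have hEdet := (isUnit_iff_isUnit_det E).1 hEunit
  set Z := W * (E⁻¹)ᴴ with hZ
  have hZinj : ∀ x, x ≠ 0 → Z *ᵥ x ≠ 0 := by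
    intro x hx
    rw [hZ, ← mulVec_mulVec]
    refine hWinj _ (mulVec_ne_zero_of_isUnit ?_ hx)
    exact isUnit_conjTranspose _ |>.2 (isUnit_nonsing_inv_iff.2 hEunit)
  have hEinv : E⁻¹ = Zᴴ * DA * Z := by
    calc E⁻¹ = E⁻¹ * (E⁻¹ * E)ᴴ := by
          rw [nonsing_inv_mul E hEdet, conjTranspose_one, Matrix.mul_one]
      _ = E⁻¹ * (Wᴴ * DA * W) * (E⁻¹)ᴴ := by rw [conjTranspose_mul, hEH, ← Matrix.mul_assoc]
      _ = Zᴴ * DA * Z := by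
          have hZH : Zᴴ = E⁻¹ * Wᴴ := by
            rw [hZ, conjTranspose_mul, conjTranspose_conjTranspose]
          rw [hZH, hZ]
          simp only [Matrix.mul_assoc]
  have hLeq : L = Zᴴ * DA * Z * C := by
    rw [← hEinv, hCE, ← Matrix.mul_assoc, nonsing_inv_mul E hEdet, Matrix.one_mul]
  have hSY : ∀ x, x ≠ 0 → (S * Y) *ᵥ x ≠ 0 := by
    intro x hx
    rw [← mulVec_mulVec]
    exact mulVec_ne_zero_of_isUnit hS (hY x hx)
  have hsum : (t.map Complex.log).sum = sumLogEigenvalues L := by rw [sumLogEigenvalues, hL]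
  rw [hsum, hLeq, IsAccretive.sumLogEigenvalues_mul
      ((isAccretive_diagonal_exp_mul_I hαmem).conjTranspose_mul_mul hZinj)
      ((isAccretive_diagonal_exp_mul_I hβmem).conjTranspose_mul_mul hSY),
    Complex.add_im, Finset.sum_add_distrib]
  exact add_le_add (sumLogEigenvalues_compression_im_le hk hα hαmem hZinj)
    (sumLogEigenvalues_compression_im_le hk hβ hβmem hSY)

end Majorization

theorem smul_mul_conjTranspose_mul_isDiag_mul {n : Type*} [Fintype n] [DecidableEq n]
    {A R D : Matrix n n ℂ} {α : n → ℝ} {θ : ℝ} (hD : D.IsDiag)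
    (hDk : ∀ k, D k k = Complex.exp ((α k : ℂ) * Complex.I)) (hA : A = Rᴴ * D * R) :
    Complex.exp (((-θ : ℝ) : ℂ) * Complex.I) • A =
      Rᴴ * (diagonal fun i => Complex.exp (((α i - θ : ℝ) : ℂ) * Complex.I)) * R := by
  have h : (diagonal fun i => Complex.exp (((α i - θ : ℝ) : ℂ) * Complex.I)) =
      Complex.exp (((-θ : ℝ) : ℂ) * Complex.I) • D := by
    rw [← hD.diagonal_diag, ← diagonal_smul]
    congr 1
    funext i
    rw [Pi.smul_apply, diag_apply, hDk, smul_eq_mul, ← Complex.exp_add]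
    congr 1
    push_cast
    ring
  rw [h, hA, Matrix.mul_smul, Matrix.smul_mul]

theorem sum_castLE_eq_sum_filter {M : Type*} [AddCommMonoid M] {n k : ℕ} (hk : k ≤ n)
    (g : Fin n → M) :
    ∑ j : Fin k, g (Fin.castLE hk j) =
      ∑ i ∈ Finset.univ.filter (fun i : Fin n => (i : ℕ) < k), g i := by
  refine Finset.sum_bij (fun j _ => Fin.castLE hk j) (fun j _ => by simp) (fun a _ b _ h => ?_)
    (fun i hi => ⟨⟨i, (Finset.mem_filter.1 hi).2⟩, Finset.mem_univ _, rfl⟩) fun _ _ => rfl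
  exact Fin.castLE_injective hk h


/-- Lemma 2: the phases of the eigenvalues of a product `A * B` of two cramped
(sectorally decomposed) matrices are majorized by the sum of the phases of `A` and the
phases of `B`. -/
theorem angle_eigenvalues_mul_majorized {n : ℕ}
    (θ₁ θ₂ : ℝ) (α β : Fin n → ℝ)
    (hα : Antitone α) (hβ : Antitone β)
    (hαmem : ∀ k, α k ∈ Set.Ioo θ₁ (θ₁ + π)) (hβmem : ∀ k, β k ∈ Set.Ioo θ₂ (θ₂ + π))
    (A B R S DA DB : Matrix (Fin n) (Fin n) ℂ)
    (hR : IsUnit R) (hS : IsUnit S) (hDA : DA.IsDiag) (hDB : DB.IsDiag)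
    (hDAk : ∀ k, DA k k = Complex.exp ((α k : ℂ) * Complex.I))
    (hDBk : ∀ k, DB k k = Complex.exp ((β k : ℂ) * Complex.I))
    (hA : A = R.conjTranspose * DA * R) (hB : B = S.conjTranspose * DB * S)
    (lam : Fin n → ℂ)
    (hlam : (A * B).charpoly = ∏ k, (X - Polynomial.C (lam k))) :
    (∀ k, lam k ≠ 0) ∧
    ∀ γ : Fin n → ℝ,
      (∀ k, γ k ∈ Set.Ioo (θ₁ + θ₂) (θ₁ + θ₂ + 2 * π) ∧
        lam k = (‖lam k‖ : ℂ) * Complex.exp ((γ k : ℂ) * Complex.I)) →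
      (∀ s : Finset (Fin n),
        ∑ i ∈ s, γ i ≤ ∑ i ∈ Finset.univ.filter (fun i : Fin n => (i : ℕ) < s.card),
          (α i + β i)) ∧
      ∑ i, γ i = ∑ i, α i + ∑ i, β i := by
  set c₁ : ℂ := Complex.exp (((-(θ₁ + π / 2) : ℝ) : ℂ) * Complex.I) with hc₁
  set c₂ : ℂ := Complex.exp (((-(θ₂ + π / 2) : ℝ) : ℂ) * Complex.I) with hc₂
  set α' : Fin n → ℝ := fun k => α k - (θ₁ + π / 2) with hα'
  set β' : Fin n → ℝ := fun k => β k - (θ₂ + π / 2) with hβ'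
  have hα'anti : Antitone α' := fun i j h => sub_le_sub_right (hα h) _
  have hβ'anti : Antitone β' := fun i j h => sub_le_sub_right (hβ h) _
  have hα'mem : ∀ k, α' k ∈ Set.Ioo (-(π / 2)) (π / 2) := fun k => by
    obtain ⟨h1, h2⟩ := hαmem k
    constructor <;> simp only [hα'] <;> linarith
  have hβ'mem : ∀ k, β' k ∈ Set.Ioo (-(π / 2)) (π / 2) := fun k => by
    obtain ⟨h1, h2⟩ := hβmem k
    constructor <;> simp only [hβ'] <;> linarith
  have hAB : (c₁ * c₂) • (A * B) =
      (Rᴴ * (diagonal fun i => Complex.exp ((α' i : ℂ) * Complex.I)) * R) *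
        (Sᴴ * (diagonal fun i => Complex.exp ((β' i : ℂ) * Complex.I)) * S) := by
    rw [← smul_mul_conjTranspose_mul_isDiag_mul hDA hDAk hA,
      ← smul_mul_conjTranspose_mul_isDiag_mul hDB hDBk hB, smul_mul_smul_comm]
  have hc : c₁ * c₂ ≠ 0 := mul_ne_zero (Complex.exp_ne_zero _) (Complex.exp_ne_zero _)
  have hrootsAB : (A * B).charpoly.roots = Finset.univ.val.map lam := by
    rw [hlam]
    have h := roots_multiset_prod_X_sub_C (Finset.univ.val.map lam)
    rwa [Multiset.map_map] at h
  have hroots : ((c₁ * c₂) • (A * B)).charpoly.roots =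
      Finset.univ.val.map fun k => c₁ * c₂ * lam k := by
    rw [roots_charpoly_smul _ hc, hrootsAB, Multiset.map_map]
    rfl
  rw [hAB] at hroots
  have hne : ∀ k, lam k ≠ 0 := by
    intro k hk
    have hdet := mul_ne_zero (isAccretive_sectoral hα'mem hR).det_ne_zero
      (isAccretive_sectoral hβ'mem hS).det_ne_zero
    rw [← det_mul, det_eq_prod_roots_charpoly, hroots] at hdet
    exact hdet (Finset.prod_eq_zero (Finset.mem_univ k) (by rw [hk, mul_zero]))
  refine ⟨hne, fun γ hγ => ?_⟩
  have hlog : ∀ k, (Complex.log (c₁ * c₂ * lam k)).im = γ k - (θ₁ + θ₂ + π) := by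
    intro k
    obtain ⟨⟨h1, h2⟩, h3⟩ := hγ k
    have hz : c₁ * c₂ * lam k =
        (‖lam k‖ : ℂ) * Complex.exp (((γ k - (θ₁ + θ₂ + π) : ℝ) : ℂ) * Complex.I) := by
      conv_lhs => rw [h3]
      rw [hc₁, hc₂, ← Complex.exp_add, mul_left_comm, ← Complex.exp_add]
      congr 2
      push_cast
      ring
    rw [hz, Complex.log_im, Complex.exp_mul_I,
      Complex.arg_mul_cos_add_sin_mul_I (norm_pos_iff.2 (hne k)) ⟨by linarith, by linarith⟩]
  have hsum : ∀ s : Finset (Fin n), ((s.val.map fun k => c₁ * c₂ * lam k).map Complex.log).sum.im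
      = ∑ k ∈ s, γ k - s.card * (θ₁ + θ₂ + π) := by
    intro s
    rw [Multiset.map_map]
    change (∑ k ∈ s, Complex.log (c₁ * c₂ * lam k)).im = _
    rw [Complex.im_sum, Finset.sum_congr rfl fun k _ => hlog k, Finset.sum_sub_distrib,
      Finset.sum_const, nsmul_eq_mul]
  refine ⟨fun s => ?_, ?_⟩
  · have hcard : (s.val.map fun k => c₁ * c₂ * lam k).card = s.card := Multiset.card_map _ _
    have hk : (s.val.map fun k => c₁ * c₂ * lam k).card ≤ n := by
      rw [hcard]
      simpa using s.card_le_univ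
    have h := sum_log_im_le_of_sectoral_mul hα'anti hβ'anti hα'mem hβ'mem hR hS
      (t := s.val.map fun k => c₁ * c₂ * lam k)
      (hroots ▸ Multiset.map_le_map (Finset.val_le_iff.2 s.subset_univ)) hk
    have hfilter : (Finset.univ.filter fun i : Fin n => (i : ℕ) < s.card).card = s.card := by
      rw [Fin.card_filter_val_lt, min_eq_right (hcard ▸ hk)]
    rw [hsum, sum_castLE_eq_sum_filter hk fun i => α' i + β' i, hcard] at h
    simp only [hα', hβ', Finset.sum_add_distrib, Finset.sum_sub_distrib, Finset.sum_const,
      nsmul_eq_mul, hfilter] at h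
    rw [Finset.sum_add_distrib]
    linarith
  · have h := sum_log_im_of_sectoral_mul hα'mem hβ'mem hR hS
    rw [sumLogEigenvalues, hroots, hsum] at h
    simp only [hα', hβ', Finset.sum_sub_distrib, Finset.sum_const, nsmul_eq_mul] at h
    linear_combination h
end

section
/- (KYP lemma) Let A ∈ Matrix (Fin n) (Fin n) ℂ have no eigenvalue on the imaginary axis (for every ω ∈ ℝ, det(ω•Complex.I•1 − A) ≠ 0), let B ∈ Matrix (Fin n) (Fin m) ℂ, and let M ∈ Matrix (Fin n ⊕ Fin m) (Fin n ⊕ Fin m) ℂ be Hermitian. For ω ∈ ℝ let F(ω) ∈ Matrix (Fin n ⊕ Fin m) (Fin m) ℂ be the vertical concatenation of (ω•I•1 − A)⁻¹ * B on top of the identity 1. Then the following are equivalent: (a) for all ω ∈ ℝ the Hermitian matrix −(F(ω)ᴴ * M * F(ω)) is positive definite, and the m×m lower-right block M₂₂ = (fun i j => M (Sum.inr i) (Sum.inr j)) satisfies (−M₂₂).PosDef; (b) there exists a Hermitian X ∈ Matrix (Fin n) (Fin n) ℂ such that −(M + Matrix.fromBlocks (Aᴴ*X + X*A) (X*B) (Bᴴ*X)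 0) is positive definite. -/
open Matrix
open scoped ComplexOrder

/-- The frequency-response matrix `F(ω) = [((jω)I - A)⁻¹ B ; I]` appearing in the
KYP lemma: the vertical concatenation of `(ω • j • 1 - A)⁻¹ * B` on top of the identity. -/
noncomputable def kypF {n m : ℕ} (A : Matrix (Fin n) (Fin n) ℂ)
    (B : Matrix (Fin n) (Fin m) ℂ) (ω : ℝ) : Matrix (Fin n ⊕ Fin m) (Fin m) ℂ :=
  Matrix.fromRows (((ω : ℂ) • Complex.I • (1 : Matrix (Fin n) (Fin n) ℂ) - A)⁻¹ * B)
    (1 : Matrix (Fin m) (Fin m) ℂ)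

open scoped InnerProductSpace in
theorem exists_orthonormalBasis_of_comp_adjoint_add_comp_adjoint_eq_zero
    {E V : Type*} [NormedAddCommGroup E] [InnerProductSpace ℂ E] [FiniteDimensional ℂ E]
    [NormedAddCommGroup V] [InnerProductSpace ℂ V] [FiniteDimensional ℂ V]
    (F G : E →ₗ[ℂ] V)
    (h : G ∘ₗ LinearMap.adjoint F + F ∘ₗ LinearMap.adjoint G = 0) :
    ∃ (u : Finset E) (b : OrthonormalBasis u ℂ E),
      ∀ k, F (b k) = 0 ∨ ∃ ω : ℝ, G (b k) = ((ω : ℂ) * Complex.I) • F (b k) := by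
  set R : Submodule ℂ E := LinearMap.range (LinearMap.adjoint F) with hR
  have hGF (y : V) : G (LinearMap.adjoint F y) = -F (LinearMap.adjoint G y) :=
    eq_neg_of_add_eq_zero_left (by simpa using LinearMap.congr_fun h y)
  have hker : LinearMap.ker (F.domRestrict R) = ⊥ := by
    rw [LinearMap.ker_eq_bot']
    rintro ⟨_, y, rfl⟩ hy
    have hy' : F (LinearMap.adjoint F y) = 0 := hy
    have : ⟪LinearMap.adjoint F y, LinearMap.adjoint F y⟫_ℂ = 0 := by
      rw [LinearMap.adjoint_inner_right, hy', inner_zero_left]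
    exact Subtype.ext (inner_self_eq_zero.mp this)
  obtain ⟨L, hL⟩ := LinearMap.exists_leftInverse_of_injective _ hker
  let K : R →ₗ[ℂ] R := L ∘ₗ G.domRestrict R
  have hFK (r : R) : F (K r) = G r := by
    obtain ⟨_, y, rfl⟩ := r
    have hy : G (LinearMap.adjoint F y) ∈ Submodule.map F R := by
      rw [hR, ← LinearMap.range_comp, LinearMap.range_self_comp_adjoint, hGF]
      exact neg_mem ⟨_, rfl⟩
    obtain ⟨s, hs, hsy⟩ := hy
    have h1 : K ⟨_, y, rfl⟩ = ⟨s, hs⟩ := by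
      have := LinearMap.congr_fun hL ⟨s, hs⟩
      simpa [K, ← hsy] using this
    rw [h1, ← hsy]
  have hK (a b : R) : ⟪K a, b⟫_ℂ = -⟪a, K b⟫_ℂ := by
    have key (r : R) (y : V) : ⟪(r : E), LinearMap.adjoint F y⟫_ℂ = ⟪F r, y⟫_ℂ :=
      LinearMap.adjoint_inner_right _ _ _
    obtain ⟨_, y, rfl⟩ := a
    obtain ⟨_, z, rfl⟩ := b
    simp only [Submodule.coe_inner]
    rw [key, hFK, LinearMap.adjoint_inner_left, hFK, hGF y, inner_neg_left,
      ← LinearMap.adjoint_inner_right, LinearMap.adjoint_inner_left]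
  have hH : (Complex.I • K).IsSymmetric := by
    intro a b
    simp [inner_smul_left, inner_smul_right, hK]
  let e := hH.eigenvectorBasis rfl
  have he (i) : G (e i : E) = ((-hH.eigenvalues rfl i : ℝ) * Complex.I) • F (e i : E) := by
    have h1 := hH.apply_eigenvectorBasis rfl i
    have h2 : K (e i) = (((-hH.eigenvalues rfl i : ℝ) : ℂ) * Complex.I) • e i := by
      have h3 : K (e i) = -(Complex.I • (Complex.I • K) (e i)) := by
        simp [smul_smul]
      rw [h3, h1, smul_smul]
      simp [mul_comm, e]
    rw [← hFK, h2]
    simp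
  have hon : Orthonormal ℂ (fun i => (e i : E)) := e.orthonormal.comp_linearIsometry R.subtypeₗᵢ
  obtain ⟨u, b, hu, hb⟩ := hon.toSubtypeRange.exists_orthonormalBasis_extension
  refine ⟨u, b, fun k => ?_⟩
  by_cases hk : (k : E) ∈ Set.range (fun i => (e i : E))
  · obtain ⟨i, hi⟩ := hk
    right
    rw [hb, ← hi]
    exact ⟨_, he i⟩
  · left
    rw [hb]
    have horth (r : R) : ⟪(r : E), (k : E)⟫_ℂ = 0 := by
      rw [← e.sum_repr r, Submodule.coe_sum, sum_inner]
      refine Finset.sum_eq_zero fun i _ => ?_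
      have hi : (e i : E) ∈ u := hu ⟨i, rfl⟩
      have := b.orthonormal.2 (i := ⟨_, hi⟩) (j := k) (fun hh => hk ⟨i, by rw [← hh]⟩)
      rw [hb] at this
      simp [inner_smul_left, this]
    have := horth ⟨_, F k, rfl⟩
    rw [LinearMap.adjoint_inner_left] at this
    exact inner_self_eq_zero.mp this

section
variable {N p : Type*} [Fintype N] [Fintype p]

open scoped MatrixOrder in
theorem Matrix.PosSemidef.exists_eq_mul_conjTranspose {Z : Matrix N N ℂ} (hZ : Z.PosSemidef) :
    ∃ W : Matrix N N ℂ, Z = W * Wᴴ := by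
  classical
  exact CStarAlgebra.nonneg_iff_eq_mul_star_self.mp hZ.nonneg

theorem re_trace_mul_conjTranspose_self (W : Matrix N N ℂ) :
    (W * Wᴴ).trace.re = ∑ i, ∑ j, ‖W i j‖ ^ 2 := by
  simp [Matrix.trace, Matrix.mul_apply, Complex.mul_conj, Complex.normSq_eq_norm_sq]
  norm_cast

theorem isCompact_posSemidef_trace_eq_one :
    IsCompact {Z : Matrix N N ℂ | Z.PosSemidef ∧ Z.trace.re = 1} := by
  have hball : IsCompact {W : Matrix N N ℂ | ∀ i j, ‖W i j‖ ≤ 1} := by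
    have := isCompact_univ_pi fun _ : N =>
      isCompact_univ_pi fun _ : N => isCompact_closedBall (0 : ℂ) 1
    refine (congrArg IsCompact ?_).mp this
    ext W
    simp only [Set.mem_pi, Set.mem_univ, true_imp_iff, mem_closedBall_zero_iff]
    rfl
  have hS : IsCompact {W : Matrix N N ℂ | (W * Wᴴ).trace.re = 1} := by
    refine hball.of_isClosed_subset (isClosed_eq (by fun_prop) continuous_const) ?_
    intro W hW i j
    rw [Set.mem_ofPred_eq, re_trace_mul_conjTranspose_self] at hW
    have h1 : ‖W i j‖ ^ 2 ≤ 1 := by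
      rw [← hW]
      refine (Finset.single_le_sum (f := fun j => ‖W i j‖ ^ 2) (fun _ _ => by positivity)
        (Finset.mem_univ j)).trans ?_
      exact Finset.single_le_sum (f := fun i => ∑ j, ‖W i j‖ ^ 2) (fun _ _ => by positivity)
        (Finset.mem_univ i)
    nlinarith [norm_nonneg (W i j)]
  refine (congrArg IsCompact ?_).mp
    (hS.image (f := fun W : Matrix N N ℂ => W * Wᴴ) (by fun_prop))
  ext Z
  constructor
  · rintro ⟨W, hW, rfl⟩
    exact ⟨posSemidef_self_mul_conjTranspose W, hW⟩
  · rintro ⟨hZ, hZ1⟩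
    obtain ⟨W, rfl⟩ := hZ.exists_eq_mul_conjTranspose
    exact ⟨W, hZ1, rfl⟩

theorem convex_posSemidef_trace_eq_one :
    Convex ℝ {Z : Matrix N N ℂ | Z.PosSemidef ∧ Z.trace.re = 1} := by
  rintro Y ⟨hY, hY1⟩ Z ⟨hZ, hZ1⟩ a b ha hb hab
  refine ⟨(hY.smul ha).add (hZ.smul hb), ?_⟩
  simp [Matrix.trace_add, Matrix.trace_smul, hY1, hZ1, hab]

theorem exists_re_trace_mul_eq [DecidableEq p] (g : Matrix p p ℂ →ₗ[ℝ] ℝ) :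
    ∃ X : Matrix p p ℂ, ∀ Y, (X * Y).trace.re = g Y := by
  refine ⟨.of fun i j => (g (single j i 1) : ℂ) - (g (single j i Complex.I) : ℂ) * Complex.I,
    fun Y => ?_⟩
  have hY : Y = ∑ i, ∑ j, ((Y i j).re • single i j 1 + (Y i j).im • single i j Complex.I) := by
    conv_lhs => rw [matrix_eq_sum_single Y]
    refine Finset.sum_congr rfl fun i _ => Finset.sum_congr rfl fun j _ => ?_
    rw [smul_single, smul_single, ← single_add]
    congr 1
    simp
  conv_rhs => rw [hY]
  simp only [map_sum, map_add, map_smul, smul_eq_mul, Matrix.trace, diag_apply, mul_apply,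
    of_apply, Complex.re_sum]
  rw [Finset.sum_comm]
  refine Finset.sum_congr rfl fun i _ => Finset.sum_congr rfl fun j _ => ?_
  simp
  ring

theorem exists_isHermitian_re_trace_mul_eq [DecidableEq p] (g : Matrix p p ℂ →ₗ[ℝ] ℝ) :
    ∃ X : Matrix p p ℂ, X.IsHermitian ∧ ∀ Y, Y.IsHermitian → (X * Y).trace.re = g Y := by
  obtain ⟨X, hX⟩ := exists_re_trace_mul_eq g
  refine ⟨(2⁻¹ : ℝ) • (X + Xᴴ), ?_, fun Y hY => ?_⟩
  · simp [IsHermitian, add_comm]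
  · have : (Xᴴ * Y).trace.re = (X * Y).trace.re := by
      have h1 : (Xᴴ * Y) = (Y * X)ᴴ := by rw [conjTranspose_mul, hY.eq]
      rw [h1, trace_conjTranspose, trace_mul_comm]
      simp
    rw [smul_mul_assoc, trace_smul, add_mul, trace_add, Complex.smul_re, Complex.add_re, this, hX]
    simp
    ring

theorem exists_isHermitian_neg_posDef (C J : Matrix p N ℂ) {M : Matrix N N ℂ} (hM : M.IsHermitian)
    (h : ∀ W : Matrix N N ℂ, C * W * (J * W)ᴴ + J * W * (C * W)ᴴ = 0 →
      0 ≤ (Wᴴ * M * W).trace.re → W = 0) :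
    ∃ X : Matrix p p ℂ, X.IsHermitian ∧ (-(M + (Cᴴ * X * J + Jᴴ * X * C))).PosDef := by
  classical
  have : LocallyConvexSpace ℝ (Matrix p p ℂ) :=
    inferInstanceAs (LocallyConvexSpace ℝ (p → p → ℂ))
  set S := {Z : Matrix N N ℂ | Z.PosSemidef ∧ Z.trace.re = 1}
  have hSc : IsCompact S := isCompact_posSemidef_trace_eq_one
  let Φ : Matrix N N ℂ →ₗ[ℝ] Matrix p p ℂ × ℝ :=
    { toFun Z := (C * Z * Jᴴ + J * Z * Cᴴ, (M * Z).trace.re)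
      map_add' Y Z := by
        simp only [Matrix.mul_add, Matrix.add_mul, trace_add, Complex.add_re, Prod.mk_add_mk]
        rw [add_add_add_comm]
      map_smul' a Z := by
        ext <;> simp }
  have hΦ : Continuous Φ := Φ.continuous_of_finiteDimensional
  have hdisj : Disjoint (Φ '' S) ({0} ×ˢ Set.Ici 0) := by
    rw [Set.disjoint_left]
    rintro _ ⟨Z, ⟨hZ, hZ1⟩, rfl⟩ ⟨h0, h1⟩
    obtain ⟨W, rfl⟩ := hZ.exists_eq_mul_conjTranspose
    have hW : W = 0 := by
      refine h W ?_ ?_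
      · simpa [Φ, Matrix.mul_assoc] using h0
      · rw [trace_mul_cycle, trace_mul_comm]
        simpa [Φ] using h1
    simp [hW] at hZ1
  obtain ⟨f, u, v, hu, huv, hv⟩ := geometric_hahn_banach_compact_closed
    (convex_posSemidef_trace_eq_one.linear_image Φ) (hSc.image hΦ)
    ((convex_singleton 0).prod (convex_Ici 0)) (isClosed_singleton.prod isClosed_Ici) hdisj
  have hv0 : v < 0 := by simpa [Prod.mk_zero_zero] using hv (0, 0) (by simp)
  have hf (x : Matrix p p ℂ × ℝ) : f x = f (x.1, 0) + x.2 * f (0, 1) := by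
    rw [← smul_eq_mul, ← map_smul, ← map_add]
    simp
  have hc : 0 ≤ f (0, 1) := by
    by_contra! hneg
    have := hv (0, v / f (0, 1)) ⟨rfl, (div_pos_of_neg_of_neg hv0 hneg).le⟩
    rw [hf] at this
    simp [Prod.mk_zero_zero, hneg.ne] at this
  obtain ⟨k, hk⟩ := hSc.bddAbove_image (f := fun Z => (M * Z).trace.re)
    (continuous_snd.comp hΦ).continuousOn
  set ε := -u / (|k| + 1)
  have hε : 0 < ε := div_pos (by linarith) (by positivity)
  have hcε : 0 < f (0, 1) + ε := by linarith
  obtain ⟨X, hX, hXg⟩ := exists_isHermitian_re_trace_mul_eq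
    ((f (0, 1) + ε)⁻¹ • (f.toLinearMap ∘ₗ LinearMap.inl ℝ (Matrix p p ℂ) ℝ))
  refine ⟨X, hX, ?_⟩
  set P := M + (Cᴴ * X * J + Jᴴ * X * C) with hP
  have hPherm : P.IsHermitian := by
    refine hM.add ?_
    simp [IsHermitian, conjTranspose_mul, hX.eq, Matrix.mul_assoc, add_comm]
  have hneg (Z) (hZ : Z ∈ S) : (P * Z).trace.re < 0 := by
    have h1 := hu _ ⟨Z, hZ, rfl⟩
    rw [hf] at h1
    have h2 : (M * Z).trace.re ≤ k := hk ⟨Z, hZ, rfl⟩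
    have h3 : (P * Z).trace = (M * Z).trace + (X * (C * Z * Jᴴ + J * Z * Cᴴ)).trace := by
      rw [hP, add_mul, add_mul, trace_add, trace_add, mul_add, trace_add]
      congr 1
      rw [add_comm]
      congr 1
      · rw [Matrix.mul_assoc, Matrix.mul_assoc, trace_mul_comm]
        simp only [Matrix.mul_assoc]
      · rw [Matrix.mul_assoc, Matrix.mul_assoc, trace_mul_comm]
        simp only [Matrix.mul_assoc]
    have h4 : (C * Z * Jᴴ + J * Z * Cᴴ).IsHermitian := by
      simp [IsHermitian, conjTranspose_mul, hZ.1.isHermitian.eq, Matrix.mul_assoc, add_comm]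
    rw [h3, Complex.add_re, hXg _ h4]
    have h5 : f (C * Z * Jᴴ + J * Z * Cᴴ, 0) + (M * Z).trace.re * f (0, 1) < u := h1
    have h6 : ε * (M * Z).trace.re < -u := by
      have : ε * (|k| + 1) = -u := div_mul_cancel₀ _ (by positivity)
      nlinarith [le_abs_self k]
    have h7 : (M * Z).trace.re + (f (0, 1) + ε)⁻¹ * f (C * Z * Jᴴ + J * Z * Cᴴ, 0) =
      (f (0, 1) + ε)⁻¹ * (f (C * Z * Jᴴ + J * Z * Cᴴ, 0) + (M * Z).trace.re * f (0, 1)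
        + ε * (M * Z).trace.re) := by
      field_simp
      ring
    refine lt_of_eq_of_lt h7 ?_
    exact mul_neg_of_pos_of_neg (inv_pos.mpr hcε) (by linarith)
  refine .of_dotProduct_mulVec_pos hPherm.neg fun z hz => ?_
  have ht : 0 < star z ⬝ᵥ z := dotProduct_star_self_pos_iff.mpr hz
  have ht' := Complex.pos_iff.mp ht
  have h1 := hneg ((star z ⬝ᵥ z).re⁻¹ • vecMulVec z (star z))
    ⟨(posSemidef_vecMulVec_self_star z).smul (inv_pos.mpr ht'.1).le, by
      rw [trace_smul, trace_vecMulVec, dotProduct_comm z, Complex.smul_re, smul_eq_mul,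
        inv_mul_cancel₀ ht'.1.ne']⟩
  rw [mul_smul_comm, trace_smul, mul_vecMulVec, trace_vecMulVec,
    dotProduct_comm (P *ᵥ z),
    Complex.smul_re, smul_eq_mul] at h1
  rw [Complex.pos_iff]
  refine ⟨?_, (hPherm.neg.im_star_dotProduct_mulVec_self z).symm⟩
  rw [neg_mulVec, dotProduct_neg, Complex.neg_re, neg_pos]
  exact (pos_iff_neg_of_mul_neg h1).mp (inv_pos.mpr ht'.1)
end

theorem exists_mul_conjTranspose_eq_one_of_mul_conjTranspose_add_eq_zero
    {p N : Type*} [Fintype p] [Fintype N] (F G : Matrix p N ℂ)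
    [DecidableEq N] (h : G * Fᴴ + F * Gᴴ = 0) :
    ∃ (u : Finset (EuclideanSpace ℂ N)) (U : Matrix N u ℂ), U * Uᴴ = 1 ∧
      ∀ k, F *ᵥ U.col k = 0 ∨ ∃ ω : ℝ, G *ᵥ U.col k = ((ω : ℂ) * Complex.I) • F *ᵥ U.col k := by
  classical
  obtain ⟨u, b, hb⟩ := exists_orthonormalBasis_of_comp_adjoint_add_comp_adjoint_eq_zero
    F.toEuclideanLin G.toEuclideanLin (by
      rw [← toEuclideanLin_conjTranspose_eq_adjoint, ← toEuclideanLin_conjTranspose_eq_adjoint,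
        ← toLpLin_mul, ← toLpLin_mul, ← map_add, h, map_zero])
  refine ⟨u, .of fun i k => b k i, ?_, fun k => ?_⟩
  · ext i j
    have := b.sum_inner_mul_inner (EuclideanSpace.single i 1) (EuclideanSpace.single j 1)
    simpa [mul_apply, EuclideanSpace.inner_single_left, EuclideanSpace.inner_single_right,
      one_apply, eq_comm, Pi.single_apply] using this
  · have hcol : (of fun i k => b k i).col k = (b k).ofLp := rfl
    rw [hcol]
    refine (hb k).imp (fun h => congrArg WithLp.ofLp h) ?_
    rintro ⟨ω, hω⟩
    exact ⟨ω, congrArg WithLp.ofLp hω⟩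

section
variable {n m : ℕ} {A : Matrix (Fin n) (Fin n) ℂ} {B : Matrix (Fin n) (Fin m) ℂ}

theorem fromCols_mul_kypF {ω : ℝ}
    (hω : ((ω : ℂ) • Complex.I • (1 : Matrix (Fin n) (Fin n) ℂ) - A).det ≠ 0) :
    fromCols A B * kypF A B ω =
      ((ω : ℂ) * Complex.I) • ((fromCols 1 0 : Matrix (Fin n) (Fin n ⊕ Fin m) ℂ) * kypF A B ω) := by
  have h := mul_nonsing_inv_cancel_left _ B (isUnit_iff_ne_zero.mpr hω)
  rw [Matrix.sub_mul, smul_smul, Matrix.smul_mul, Matrix.one_mul] at h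
  rw [kypF, smul_smul, fromCols_mul_fromRows, fromCols_mul_fromRows, Matrix.mul_one, Matrix.one_mul,
    Matrix.zero_mul, add_zero]
  exact (sub_eq_iff_eq_add'.mp h).symm

theorem eq_kypF_mulVec {ω : ℝ}
    (hω : ((ω : ℂ) • Complex.I • (1 : Matrix (Fin n) (Fin n) ℂ) - A).det ≠ 0)
    {w : Fin n ⊕ Fin m → ℂ}
    (hw : fromCols A B *ᵥ w = ((ω : ℂ) * Complex.I) • (fromCols 1 0 *ᵥ w)) :
    w = kypF A B ω *ᵥ (w ∘ Sum.inr) := by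
  rw [fromCols_mulVec, fromCols_mulVec] at hw
  simp only [one_mulVec, zero_mulVec, add_zero] at hw
  have h : ((ω : ℂ) • Complex.I • (1 : Matrix (Fin n) (Fin n) ℂ) - A) *ᵥ (w ∘ Sum.inl) =
      B *ᵥ (w ∘ Sum.inr) := by
    rw [sub_mulVec, smul_smul, smul_mulVec, one_mulVec, ← hw, add_sub_cancel_left]
  rw [kypF, fromRows_mulVec, one_mulVec, ← mulVec_mulVec, ← h, mulVec_mulVec,
    nonsing_inv_mul _ (isUnit_iff_ne_zero.mpr hω), one_mulVec, Sum.elim_comp_inl_inr]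

theorem fromBlocks_eq_conjTranspose_mul (X : Matrix (Fin n) (Fin n) ℂ) :
    fromBlocks (Aᴴ * X + X * A) (X * B) (Bᴴ * X) 0 =
      (fromCols A B)ᴴ * X * fromCols (1 : Matrix (Fin n) (Fin n) ℂ) (0 : Matrix _ (Fin m) ℂ) +
      (fromCols (1 : Matrix (Fin n) (Fin n) ℂ) (0 : Matrix _ (Fin m) ℂ))ᴴ * X * fromCols A B := by
  rw [conjTranspose_fromCols_eq_fromRows_conjTranspose,
    conjTranspose_fromCols_eq_fromRows_conjTranspose, fromRows_mul _ _ X, fromRows_mul _ _ X,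
    fromRows_mul_fromCols, fromRows_mul_fromCols, fromBlocks_add]
  simp

theorem re_dotProduct_mulVec_neg {M : Matrix (Fin n ⊕ Fin m) (Fin n ⊕ Fin m) ℂ}
    (hA : ∀ ω : ℝ, ((ω : ℂ) • Complex.I • (1 : Matrix (Fin n) (Fin n) ℂ) - A).det ≠ 0)
    (hF : ∀ ω : ℝ, (-((kypF A B ω)ᴴ * M * kypF A B ω)).PosDef)
    (hM₂₂ : (-(M.submatrix Sum.inr Sum.inr)).PosDef) {w : Fin n ⊕ Fin m → ℂ} (hw : w ≠ 0)
    (h : fromCols 1 0 *ᵥ w = (0 : Fin n → ℂ) ∨ ∃ ω : ℝ,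
      fromCols A B *ᵥ w = ((ω : ℂ) * Complex.I) • (fromCols 1 0 *ᵥ w)) :
    (star w ⬝ᵥ M *ᵥ w).re < 0 := by
  set y := w ∘ Sum.inr with hy
  obtain h | ⟨ω, h⟩ := h
  · have hinl : w ∘ Sum.inl = 0 := by simpa [fromCols_mulVec] using h
    have hwy : w = Sum.elim (0 : Fin n → ℂ) y := by rw [← hinl, hy, Sum.elim_comp_inl_inr]
    have hy0 : y ≠ 0 := by
      intro h0
      exact hw (by rw [hwy, h0, Sum.elim_zero_zero])
    have h1 := (Complex.pos_iff.mp (hM₂₂.dotProduct_mulVec_pos hy0)).1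
    have h2 : star w ⬝ᵥ M *ᵥ w = star y ⬝ᵥ M.submatrix Sum.inr Sum.inr *ᵥ y := by
      rw [hwy]
      simp [dotProduct, mulVec]
    rw [h2]
    simpa [neg_mulVec] using h1
  · have hwy := eq_kypF_mulVec (hA ω) h
    have hy0 : y ≠ 0 := by
      intro h0
      exact hw (by rw [hwy, ← hy, h0, mulVec_zero])
    have h1 := (Complex.pos_iff.mp ((hF ω).dotProduct_mulVec_pos hy0)).1
    have h2 : star w ⬝ᵥ M *ᵥ w = star y ⬝ᵥ ((kypF A B ω)ᴴ * M * kypF A B ω) *ᵥ y := by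
      rw [hwy, ← hy, star_mulVec, ← dotProduct_mulVec, mulVec_mulVec, mulVec_mulVec,
        Matrix.mul_assoc]
    rw [h2]
    simpa [neg_mulVec] using h1

end

theorem trace_conjTranspose_mul_mul {N κ : Type*} [Fintype N] [Fintype κ]
    (W : Matrix N κ ℂ) (M : Matrix N N ℂ) :
    (Wᴴ * M * W).trace = ∑ k, star (W.col k) ⬝ᵥ M *ᵥ W.col k := by
  refine Finset.sum_congr rfl fun k _ => ?_
  rw [diag_apply, Matrix.mul_assoc]
  rfl

/-- KYP lemma: equivalence between a strict frequency-domain inequality over the whole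
imaginary axis (including `ω = ∞`, encoded by the lower-right block condition) and the
solvability of a linear matrix inequality. -/
theorem kyp_lemma {n m : ℕ}
    (A : Matrix (Fin n) (Fin n) ℂ) (B : Matrix (Fin n) (Fin m) ℂ)
    (M : Matrix (Fin n ⊕ Fin m) (Fin n ⊕ Fin m) ℂ) (hM : M.IsHermitian)
    (hA : ∀ ω : ℝ, ((ω : ℂ) • Complex.I • (1 : Matrix (Fin n) (Fin n) ℂ) - A).det ≠ 0) :
    ((∀ ω : ℝ, (-((kypF A B ω).conjTranspose * M * kypF A B ω)).PosDef) ∧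
      (-(M.submatrix Sum.inr Sum.inr)).PosDef) ↔
    ∃ X : Matrix (Fin n) (Fin n) ℂ, X.IsHermitian ∧
      (-(M + Matrix.fromBlocks (A.conjTranspose * X + X * A) (X * B)
          (B.conjTranspose * X) 0)).PosDef := by
  have hblock (X : Matrix (Fin n) (Fin n) ℂ) := fromBlocks_eq_conjTranspose_mul (A := A) (B := B) X
  constructor
  · rintro ⟨hF, hM₂₂⟩
    simp only [hblock]
    refine exists_isHermitian_neg_posDef (fromCols A B) (fromCols 1 0) hM fun W hW htr => ?_
    obtain ⟨u, U, hU, hcol⟩ :=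
      exists_mul_conjTranspose_eq_one_of_mul_conjTranspose_add_eq_zero _ _ hW
    have hneg (k) (hk : (W * U).col k ≠ 0) :
        (star ((W * U).col k) ⬝ᵥ M *ᵥ (W * U).col k).re < 0 := by
      refine re_dotProduct_mulVec_neg hA hF hM₂₂ hk ?_
      have hWU : (W * U).col k = W *ᵥ U.col k := rfl
      rw [hWU, mulVec_mulVec, mulVec_mulVec]
      exact hcol k
    have htrace : (Wᴴ * M * W).trace = ((W * U)ᴴ * M * (W * U)).trace := by
      calc (Wᴴ * M * W).trace = (Wᴴ * M * W * (U * Uᴴ)).trace := by rw [hU, Matrix.mul_one]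
        _ = _ := by
          rw [← Matrix.mul_assoc, trace_mul_comm, conjTranspose_mul]
          simp only [Matrix.mul_assoc]
    rw [htrace, trace_conjTranspose_mul_mul, Complex.re_sum] at htr
    have hnonpos (k) : (star ((W * U).col k) ⬝ᵥ M *ᵥ (W * U).col k).re ≤ 0 := by
      by_cases hk : (W * U).col k = 0
      · simp [hk]
      · exact (hneg k hk).le
    have hWU : W * U = 0 := by
      ext i k
      by_contra hik
      refine htr.not_gt (Finset.sum_neg' (fun k _ => hnonpos k) ⟨k, Finset.mem_univ k, hneg k ?_⟩)
      exact fun h0 => hik (congrFun h0 i)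
    rw [← Matrix.mul_one W, ← hU, ← Matrix.mul_assoc, hWU, Matrix.zero_mul]
  · rintro ⟨X, hX, hXM⟩
    constructor
    · intro ω
      have hinj : Function.Injective (kypF A B ω).mulVec := by
        intro y z hyz
        simpa [kypF, fromRows_mulVec] using congrArg (· ∘ Sum.inr) hyz
      have h := hXM.conjTranspose_mul_mul_same hinj
      convert h using 1
      have hC := fromCols_mul_kypF (B := B) (hA ω)
      have h0 : (kypF A B ω)ᴴ * fromBlocks (Aᴴ * X + X * A) (X * B) (Bᴴ * X) 0 *
          kypF A B ω = 0 := by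
        rw [hblock]
        set J : Matrix (Fin n) (Fin n ⊕ Fin m) ℂ := fromCols 1 0
        calc _ = (fromCols A B * kypF A B ω)ᴴ * X * (J * kypF A B ω) +
              (J * kypF A B ω)ᴴ * X * (fromCols A B * kypF A B ω) := by
              simp only [conjTranspose_mul, Matrix.mul_add, Matrix.add_mul, Matrix.mul_assoc]
          _ = 0 := by
              rw [hC]
              simp [conjTranspose_smul, Matrix.neg_mul, -conjTranspose_mul]
      rw [Matrix.mul_neg, Matrix.neg_mul, Matrix.mul_add, Matrix.add_mul, h0, add_zero]
    · have h := hXM.submatrix (e := Sum.inr) Sum.inr_injective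
      convert h using 1
      ext i j
      simp
end

section
/- (Generalized KYP lemma for the nonnegative imaginary axis) Let A ∈ Matrix (Fin n) (Fin n) ℂ have no eigenvalue of the form ω*Complex.I with ω ≥ 0, let B ∈ Matrix (Fin n) (Fin m) ℂ, and let M ∈ Matrix (Fin n ⊕ Fin m) (Fin n ⊕ Fin m) ℂ be Hermitian. For ω ≥ 0 let F(ω) be the vertical concatenation of (ω•I•1 − A)⁻¹ * B on top of the identity. Then the following are equivalent: (a) for all ω ≥ 0 the matrix −(F(ω)ᴴ * M * F(ω)) is positive definite, and the lower-right m×m block M₂₂ of M satisfies (−M₂₂).PosDef; (b) there exist Hermitian matrices X, Y ∈ Matrix (Fin n) (Fin n) ℂ with Y positive definite such that, writing K = Matrix.fromBlocks A B 1 0 and P = Matrix.fromBlocks 0 (X + Complex.I•Y) (X − Complex.I•Y) 0, the matrix −(Kᴴ * P * K + M) is positive definite. -/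
open Matrix
open scoped ComplexOrder

theorem Matrix.isOpen_setOf_forall_re_dotProduct_mulVec_pos {N : Type*} [Fintype N] :
    IsOpen {Z : Matrix N N ℂ | ∀ v : N → ℂ, v ≠ 0 → 0 < (star v ⬝ᵥ (Z *ᵥ v)).re} := by
  have hset : {Z : Matrix N N ℂ | ∀ v : N → ℂ, v ≠ 0 → 0 < (star v ⬝ᵥ (Z *ᵥ v)).re} =
      {Z | ∀ v ∈ Metric.sphere (0 : N → ℂ) 1, 0 < (star v ⬝ᵥ (Z *ᵥ v)).re} := by
    ext Z
    refine ⟨fun h v hv => h v ?_, fun h v hv => ?_⟩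
    · rintro rfl
      simp at hv
    · have hn : 0 < ‖v‖ := norm_pos_iff.mpr hv
      have h1 := h (((‖v‖⁻¹ : ℝ) : ℂ) • v) (by
        simp [norm_smul, hn.ne'])
      simp only [star_smul, mulVec_smul, smul_dotProduct, dotProduct_smul, smul_eq_mul,
        RCLike.star_def, Complex.conj_ofReal, Complex.re_ofReal_mul] at h1
      have hi : 0 < ‖v‖⁻¹ := inv_pos.mpr hn
      exact (mul_pos_iff_of_pos_left hi).mp ((mul_pos_iff_of_pos_left hi).mp h1)
  rw [hset, isOpen_iff_eventually]
  intro Z hZ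
  refine (isCompact_sphere (0 : N → ℂ) 1).eventually_forall_of_forall_eventually fun v hv => ?_
  have hc : Continuous fun p : Matrix N N ℂ × (N → ℂ) => (star p.2 ⬝ᵥ (p.1 *ᵥ p.2)).re := by
    fun_prop
  exact hc.continuousAt.eventually (lt_mem_nhds (hZ v hv))

theorem Matrix.exists_re_trace_mul_eq {N : Type*} [Fintype N] [DecidableEq N]
    (f : Matrix N N ℂ →ₗ[ℝ] ℝ) :
    ∃ W : Matrix N N ℂ, ∀ Z, ((W * Z).trace).re = f Z := by
  refine ⟨of fun i j => ⟨f (single j i 1), -f (single j i Complex.I)⟩, fun Z => ?_⟩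
  have hs : ∀ i j (z : ℂ), f (single j i z) =
      z.re * f (single j i 1) + z.im * f (single j i Complex.I) := by
    intro i j z
    rw [← smul_eq_mul, ← smul_eq_mul, ← map_smul, ← map_smul, ← map_add, smul_single, smul_single,
      ← single_add]
    congr 2
    simp
  conv_rhs => rw [matrix_eq_sum_single Z, map_sum]
  simp only [map_sum, trace, diag, mul_apply, Complex.re_sum, of_apply]
  rw [Finset.sum_comm]
  refine Finset.sum_congr rfl fun j _ => Finset.sum_congr rfl fun i _ => ?_
  conv_rhs => rw [hs]
  simp [Complex.mul_re]
  ring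

open scoped Pointwise in
theorem Matrix.exists_isHermitian_forall_re_trace_pos {N : Type*} [Fintype N] [DecidableEq N]
    {S : Set (Matrix N N ℂ)} (hS : Convex ℝ S) (hSh : ∀ L ∈ S, L.IsHermitian)
    (hneg : ∀ L ∈ S, ¬ (-L).PosDef) :
    ∃ W : Matrix N N ℂ, W.IsHermitian ∧
      ∀ L ∈ S, ∀ Q : Matrix N N ℂ, Q.PosDef → 0 < ((W * (L + Q)).trace).re := by
  set O := {Z : Matrix N N ℂ | ∀ v : N → ℂ, v ≠ 0 → 0 < (star v ⬝ᵥ (Z *ᵥ v)).re}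
  have hOc : Convex ℝ O := by
    intro Z hZ Z' hZ' a b ha hb hab v hv
    have h1 := hZ v hv
    have h2 := hZ' v hv
    simp only [add_mulVec, smul_mulVec, dotProduct_add, dotProduct_smul, Complex.add_re,
      Complex.smul_re, smul_eq_mul]
    rcases ha.eq_or_lt with rfl | ha
    · simp_all
    · have := mul_pos ha h1
      have := mul_nonneg hb h2.le
      linarith
  have hopen : IsOpen (S + O) := Matrix.isOpen_setOf_forall_re_dotProduct_mulVec_pos.add_left
  have h0 : (0 : Matrix N N ℂ) ∉ S + O := by
    rintro ⟨L, hL, Z, hZ, hLZ⟩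
    have hZL : Z = -L := by
      rw [eq_neg_iff_add_eq_zero, add_comm]; exact hLZ
    subst hZL
    refine hneg L hL (.of_dotProduct_mulVec_pos (hSh L hL).neg fun v hv => ?_)
    rw [Complex.pos_iff]
    exact ⟨hZ v hv, ((hSh L hL).neg.im_star_dotProduct_mulVec_self v).symm⟩
  obtain ⟨f, hf⟩ := geometric_hahn_banach_open_point (hS.add hOc) hopen h0
  obtain ⟨W, hW⟩ := Matrix.exists_re_trace_mul_eq (-(f : Matrix N N ℂ →ₗ[ℝ] ℝ))
  refine ⟨W + Wᴴ, isHermitian_add_transpose_self W, fun L hL Q hQ => ?_⟩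
  have hh : (L + Q).IsHermitian := (hSh L hL).add hQ.isHermitian
  have h1 : ((Wᴴ * (L + Q)).trace).re = ((W * (L + Q)).trace).re := by
    rw [← hh.eq, ← conjTranspose_mul, trace_conjTranspose, hh.eq, trace_mul_comm]
    simp
  have h2 : 0 < ((W * (L + Q)).trace).re := by
    rw [hW]
    have := hf (L + Q) (Set.add_mem_add hL fun v hv =>
      (Complex.pos_iff.mp (hQ.dotProduct_mulVec_pos hv)).1)
    rw [map_zero] at this
    simpa only [LinearMap.neg_apply, ContinuousLinearMap.coe_coe, neg_pos] using this
  rw [add_mul, trace_add, Complex.add_re, h1]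
  linarith

theorem Matrix.IsHermitian.exists_diagonalization {N : Type*} [Fintype N] [DecidableEq N]
    {S : Matrix N N ℂ} (hS : S.IsHermitian) :
    ∃ (U : Matrix N N ℂ) (d : N → ℝ), U * Uᴴ = 1 ∧ Uᴴ * U = 1 ∧
      S = U * diagonal (fun i => (d i : ℂ)) * Uᴴ :=
  ⟨hS.eigenvectorUnitary, hS.eigenvalues, Unitary.mul_star_self_of_mem hS.eigenvectorUnitary.2,
    Unitary.star_mul_self_of_mem hS.eigenvectorUnitary.2, hS.spectral_theorem⟩

theorem Matrix.PosSemidef.exists_eq_mul_conjTranspose_s15 {N : Type*} [Fintype N] [DecidableEq N]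
    {S : Matrix N N ℂ} (hS : S.PosSemidef) : ∃ V : Matrix N N ℂ, S = V * Vᴴ := by
  open scoped MatrixOrder in
  obtain ⟨V, hV⟩ := CStarAlgebra.nonneg_iff_eq_mul_star_self.mp hS.nonneg
  exact ⟨V, hV⟩

theorem Matrix.IsHermitian.exists_generalizedInverse {N : Type*} [Fintype N] [DecidableEq N]
    {S : Matrix N N ℂ} (hS : S.IsHermitian) :
    ∃ T : Matrix N N ℂ, T.IsHermitian ∧ S * T * S = S ∧ T * S * T = T := by
  obtain ⟨U, d, -, hU, rfl⟩ := hS.exists_diagonalization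
  refine ⟨U * diagonal (fun i => ((d i)⁻¹ : ℂ)) * Uᴴ,
    isHermitian_mul_mul_conjTranspose _ (isHermitian_diagonal_of_self_adjoint _ ?_), ?_, ?_⟩
  · ext i
    simp
  · calc _ = U * diagonal (fun i => (d i : ℂ)) * (Uᴴ * U) * diagonal (fun i => ((d i)⁻¹ : ℂ)) *
          (Uᴴ * U) * diagonal (fun i => (d i : ℂ)) * Uᴴ := by noncomm_ring
      _ = _ := by
        simp only [hU, mul_one, mul_assoc U, diagonal_mul_diagonal]
        congr 3
        ext i
        by_cases h : (d i : ℂ) = 0 <;> simp [h]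
  · calc _ = U * diagonal (fun i => ((d i)⁻¹ : ℂ)) * (Uᴴ * U) * diagonal (fun i => (d i : ℂ)) *
          (Uᴴ * U) * diagonal (fun i => ((d i)⁻¹ : ℂ)) * Uᴴ := by noncomm_ring
      _ = _ := by
        simp only [hU, mul_one, mul_assoc U, diagonal_mul_diagonal]
        congr 3
        ext i
        by_cases h : (d i : ℂ) = 0 <;> simp [h]

theorem Matrix.PosSemidef.exists_isHermitian_add_mul_eq {n r : Type*} [Fintype n] [Fintype r]
    [DecidableEq n] {G H : Matrix n r ℂ} (hGH : (H * Gᴴ).PosSemidef) :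
    ∃ Q : Matrix r r ℂ, Q.IsHermitian ∧ (Q - Q * Q).PosSemidef ∧ (G + H) * Q = G := by
  have hS : (G * Gᴴ + H * Gᴴ).IsHermitian :=
    (isHermitian_mul_conjTranspose_self G).add hGH.isHermitian
  obtain ⟨T, hT, hSTS, hTST⟩ := hS.exists_generalizedInverse
  refine ⟨Gᴴ * T * G, isHermitian_conjTranspose_mul_mul G hT, ?_, ?_⟩
  · have h1 : Gᴴ * T * G - Gᴴ * T * G * (Gᴴ * T * G) = (T * G)ᴴ * (H * Gᴴ) * (T * G) := by
      rw [conjTranspose_mul, hT.eq]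
      nth_rewrite 1 [← hTST]
      simp only [Matrix.mul_assoc, Matrix.mul_add, Matrix.add_mul]
      abel
    rw [h1]
    exact hGH.conjTranspose_mul_mul_same _
  · set S := G * Gᴴ + H * Gᴴ with hSdef
    have h2 : (1 - S * T) * S * (1 - S * T)ᴴ = 0 := by
      rw [Matrix.sub_mul, hSTS, Matrix.one_mul, sub_self, Matrix.zero_mul]
    have h3 : ((1 - S * T) * G) * ((1 - S * T) * G)ᴴ +
        (1 - S * T) * (H * Gᴴ) * (1 - S * T)ᴴ = 0 := by
      rw [← h2, conjTranspose_mul]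
      generalize 1 - S * T = D
      rw [hSdef]
      simp only [Matrix.mul_assoc, Matrix.mul_add, Matrix.add_mul]
    have h4 : (((1 - S * T) * G) * ((1 - S * T) * G)ᴴ).trace = 0 :=
      ((add_eq_zero_iff_of_nonneg (posSemidef_self_mul_conjTranspose _).trace_nonneg
        (hGH.mul_mul_conjTranspose_same _).trace_nonneg).mp
          (by rw [← trace_add, h3, trace_zero])).1
    rw [trace_mul_conjTranspose_self_eq_zero_iff, Matrix.sub_mul, Matrix.one_mul,
      sub_eq_zero] at h4
    conv_rhs => rw [h4, hSdef]
    simp only [Matrix.mul_assoc, Matrix.add_mul]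

theorem Matrix.PosSemidef.exists_unitary_columns_proportional {n r : Type*} [Fintype n]
    [Fintype r] [DecidableEq n] [DecidableEq r] {G H : Matrix n r ℂ}
    (hGH : (H * Gᴴ).PosSemidef) :
    ∃ (U : Matrix r r ℂ) (d : r → ℝ), U * Uᴴ = 1 ∧ (∀ k, 0 ≤ d k ∧ d k ≤ 1) ∧
      ∀ k, (d k : ℂ) • (H * U).col k = ((1 - d k : ℝ) : ℂ) • (G * U).col k := by
  obtain ⟨Q, hQ, hQQ, hGQ⟩ := hGH.exists_isHermitian_add_mul_eq
  obtain ⟨U, d, hU, hU', rfl⟩ := hQ.exists_diagonalization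
  refine ⟨U, d, hU, fun k => ?_, fun k => ?_⟩
  · have h1 : Uᴴ * (U * diagonal (fun i => (d i : ℂ)) * Uᴴ -
        U * diagonal (fun i => (d i : ℂ)) * Uᴴ * (U * diagonal (fun i => (d i : ℂ)) * Uᴴ)) * U =
        diagonal (fun i => ((d i - d i * d i : ℝ) : ℂ)) := by
      calc _ = (Uᴴ * U) * diagonal (fun i => (d i : ℂ)) * (Uᴴ * U) - (Uᴴ * U) *
            diagonal (fun i => (d i : ℂ)) * (Uᴴ * U) * diagonal (fun i => (d i : ℂ)) *
            (Uᴴ * U) := by noncomm_ring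
        _ = _ := by simp [hU', diagonal_mul_diagonal, diagonal_sub]
    have h2 := hQQ.conjTranspose_mul_mul_same U
    rw [h1, posSemidef_diagonal_iff] at h2
    have h3 : 0 ≤ d k - d k * d k := by exact_mod_cast h2 k
    constructor <;> nlinarith
  · have h1 : (G + H) * U * diagonal (fun i => (d i : ℂ)) = G * U := by
      conv_rhs => rw [← hGQ]
      simp only [Matrix.mul_assoc, hU', Matrix.mul_one]
    ext i
    have h2 := congrFun (congrFun h1 i) k
    rw [mul_diagonal, Matrix.add_mul, add_apply] at h2
    simp only [Pi.smul_apply, col_apply, smul_eq_mul]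
    push_cast
    linear_combination h2

theorem Matrix.PosSemidef.of_re_trace_mul_vecMulVec_nonneg {N : Type*} [Fintype N]
    {W : Matrix N N ℂ} (hW : W.IsHermitian)
    (h : ∀ v : N → ℂ, 0 ≤ ((W * vecMulVec v (star v)).trace).re) : W.PosSemidef := by
  refine .of_dotProduct_mulVec_nonneg hW fun v => ?_
  rw [Complex.nonneg_iff]
  refine ⟨?_, (hW.im_star_dotProduct_mulVec_self v).symm⟩
  have := h v
  rwa [mul_vecMulVec, trace_vecMulVec, dotProduct_comm] at this

section KYP

variable {n m : ℕ} (A : Matrix (Fin n) (Fin n) ℂ) (B : Matrix (Fin n) (Fin m) ℂ)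

/-- The term `Kᴴ (Σ ⊗ X + Ψ ⊗ Y) K` of the KYP matrix inequality, linear in `X`, `Y`. -/
noncomputable def kypL (X Y : Matrix (Fin n) (Fin n) ℂ) :
    Matrix (Fin n ⊕ Fin m) (Fin n ⊕ Fin m) ℂ :=
  (fromBlocks A B (1 : Matrix (Fin n) (Fin n) ℂ) 0)ᴴ *
    fromBlocks 0 (X + Complex.I • Y) (X - Complex.I • Y) 0 *
    fromBlocks A B (1 : Matrix (Fin n) (Fin n) ℂ) 0

theorem kypL_add (X Y X' Y' : Matrix (Fin n) (Fin n) ℂ) :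
    kypL A B (X + X') (Y + Y') = kypL A B X Y + kypL A B X' Y' := by
  simp only [kypL, ← Matrix.mul_add, ← Matrix.add_mul, fromBlocks_add]
  congr 3 <;> simp only [smul_add, add_zero] <;> abel

theorem kypL_smul (t : ℝ) (X Y : Matrix (Fin n) (Fin n) ℂ) :
    kypL A B (t • X) (t • Y) = t • kypL A B X Y := by
  have h : fromBlocks 0 (t • X + Complex.I • t • Y) (t • X - Complex.I • t • Y) 0 =
      t • fromBlocks 0 (X + Complex.I • Y) (X - Complex.I • Y) 0 := by
    simp only [fromBlocks_smul, smul_add, smul_sub, smul_zero, smul_comm t Complex.I]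
  rw [kypL, kypL, h, Matrix.mul_smul, Matrix.smul_mul]

theorem kypL_isHermitian {X Y : Matrix (Fin n) (Fin n) ℂ} (hX : X.IsHermitian)
    (hY : Y.IsHermitian) : (kypL A B X Y).IsHermitian := by
  refine isHermitian_conjTranspose_mul_mul _ ?_
  rw [isHermitian_fromBlocks_iff]
  simp [IsHermitian, hX.eq, hY.eq, sub_eq_add_neg]

variable {A B}

theorem conjTranspose_fromRows_mul_kypL_mul {r : Type*} [Fintype r]
    {H G : Matrix (Fin n) r ℂ} {V : Matrix (Fin m) r ℂ} (h : A * H + B * V = Complex.I • G)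
    (X Y : Matrix (Fin n) (Fin n) ℂ) :
    (fromRows H V)ᴴ * kypL A B X Y * fromRows H V =
      Gᴴ * Y * H + Hᴴ * Y * G + Complex.I • (Hᴴ * X * G - Gᴴ * X * H) := by
  have hK : fromBlocks A B (1 : Matrix (Fin n) (Fin n) ℂ) 0 * fromRows H V =
      fromRows (Complex.I • G) H := by
    rw [fromBlocks_mul_fromRows, h]
    simp
  calc _ = (fromBlocks A B (1 : Matrix (Fin n) (Fin n) ℂ) 0 * fromRows H V)ᴴ *
        fromBlocks 0 (X + Complex.I • Y) (X - Complex.I • Y) 0 *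
        (fromBlocks A B (1 : Matrix (Fin n) (Fin n) ℂ) 0 * fromRows H V) := by
        simp only [kypL, conjTranspose_mul, Matrix.mul_assoc]
    _ = _ := by
      rw [hK, Matrix.mul_assoc, fromBlocks_mul_fromRows,
        conjTranspose_fromRows_eq_fromCols_conjTranspose, fromCols_mul_fromRows]
      simp only [conjTranspose_smul, Matrix.zero_mul, zero_add, add_zero, Matrix.add_mul,
        Matrix.sub_mul, Matrix.mul_add, Matrix.mul_sub, Matrix.smul_mul, Matrix.mul_smul,
        smul_zero, RCLike.star_def, Complex.conj_I, Matrix.mul_assoc]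
      match_scalars <;> first | ring1 | linear_combination -Complex.I_mul_I

theorem fromRows_one_mulVec_injective (R : Matrix (Fin n) (Fin m) ℂ) :
    Function.Injective (fromRows R (1 : Matrix (Fin m) (Fin m) ℂ)).mulVec := by
  intro v w h
  simp only [fromRows_mulVec, one_mulVec] at h
  exact (Sum.elim_eq_iff.mp h).2

theorem submatrix_inr_eq (M : Matrix (Fin n ⊕ Fin m) (Fin n ⊕ Fin m) ℂ) :
    M.submatrix Sum.inr Sum.inr =
      (fromRows (0 : Matrix (Fin n) (Fin m) ℂ) (1 : Matrix (Fin m) (Fin m) ℂ))ᴴ * M *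
        fromRows (0 : Matrix (Fin n) (Fin m) ℂ) (1 : Matrix (Fin m) (Fin m) ℂ) := by
  conv_rhs => rw [← fromBlocks_toBlocks M]
  rw [Matrix.mul_assoc, fromBlocks_mul_fromRows, conjTranspose_fromRows_eq_fromCols_conjTranspose,
    fromCols_mul_fromRows]
  simp
  rfl

theorem kyp_frequency_inequality_of_posDef {M : Matrix (Fin n ⊕ Fin m) (Fin n ⊕ Fin m) ℂ}
    {X Y : Matrix (Fin n) (Fin n) ℂ} (h : (-(kypL A B X Y + M)).PosDef)
    {R G : Matrix (Fin n) (Fin m) ℂ} (hR : A * R + B = Complex.I • G)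
    (hX : Rᴴ * X * G = Gᴴ * X * R) (hY : (Gᴴ * Y * R + Rᴴ * Y * G).PosSemidef) :
    (-((fromRows R (1 : Matrix (Fin m) (Fin m) ℂ))ᴴ * M *
      fromRows R (1 : Matrix (Fin m) (Fin m) ℂ))).PosDef := by
  have h1 := conjTranspose_fromRows_mul_kypL_mul (V := (1 : Matrix (Fin m) (Fin m) ℂ))
    (by rw [Matrix.mul_one]; exact hR) X Y
  rw [hX, sub_self, smul_zero, add_zero] at h1
  convert (h.conjTranspose_mul_mul_same (fromRows_one_mulVec_injective R)).add_posSemidef hY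
    using 1
  simp only [Matrix.mul_neg, Matrix.neg_mul, Matrix.mul_add, Matrix.add_mul, h1]
  abel

end KYP

section KYP

variable {n m : ℕ} {A : Matrix (Fin n) (Fin n) ℂ} {B : Matrix (Fin n) (Fin m) ℂ}

theorem mul_kypF_resolvent {ω : ℝ}
    (hA : ((ω : ℂ) • Complex.I • (1 : Matrix (Fin n) (Fin n) ℂ) - A).det ≠ 0) :
    A * (((ω : ℂ) • Complex.I • (1 : Matrix (Fin n) (Fin n) ℂ) - A)⁻¹ * B) + B =
      Complex.I • (ω : ℂ) •
        (((ω : ℂ) • Complex.I • (1 : Matrix (Fin n) (Fin n) ℂ) - A)⁻¹ * B) := by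
  have h := mul_nonsing_inv_cancel_left _ B (isUnit_iff_ne_zero.mpr hA)
  rw [Matrix.sub_mul, Matrix.smul_mul, Matrix.smul_mul, Matrix.one_mul, sub_eq_iff_eq_add] at h
  rw [smul_comm Complex.I, h, add_comm]

theorem re_dotProduct_mulVec_neg_of_frequency_inequality
    {M : Matrix (Fin n ⊕ Fin m) (Fin n ⊕ Fin m) ℂ}
    (hA : ∀ ω : ℝ, 0 ≤ ω →
      ((ω : ℂ) • Complex.I • (1 : Matrix (Fin n) (Fin n) ℂ) - A).det ≠ 0)
    (hF : ∀ ω : ℝ, 0 ≤ ω → (-((kypF A B ω).conjTranspose * M * kypF A B ω)).PosDef)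
    (hM22 : (-(M.submatrix Sum.inr Sum.inr)).PosDef)
    {x y : Fin n → ℂ} {w : Fin m → ℂ} {d : ℝ} (hd0 : 0 ≤ d) (hd1 : d ≤ 1)
    (hxy : A *ᵥ x + B *ᵥ w = Complex.I • y) (hd : (d : ℂ) • x = ((1 - d : ℝ) : ℂ) • y)
    (hv : Sum.elim x w ≠ 0) :
    (star (Sum.elim x w) ⬝ᵥ (M *ᵥ Sum.elim x w)).re < 0 := by
  have key : ∀ F : Matrix (Fin n ⊕ Fin m) (Fin m) ℂ, (-(Fᴴ * M * F)).PosDef →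
      Sum.elim x w = F *ᵥ w → w ≠ 0 →
      (star (Sum.elim x w) ⬝ᵥ (M *ᵥ Sum.elim x w)).re < 0 := by
    intro F hF hFw hw
    have h1 := (Complex.pos_iff.mp (hF.dotProduct_mulVec_pos hw)).1
    rw [neg_mulVec, dotProduct_neg, Complex.neg_re, ← mulVec_mulVec, ← mulVec_mulVec,
      dotProduct_mulVec, ← star_mulVec, ← hFw] at h1
    linarith
  rcases hd1.eq_or_lt with rfl | hd1
  · have hx : x = 0 := by simpa using hd
    subst hx
    refine key (fromRows (0 : Matrix (Fin n) (Fin m) ℂ) (1 : Matrix (Fin m) (Fin m) ℂ))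
      (by rwa [← submatrix_inr_eq]) (by simp [fromRows_mulVec]) ?_
    rintro rfl
    simp at hv
  · have hd' : 0 < 1 - d := by linarith
    have hω : 0 ≤ d / (1 - d) := div_nonneg hd0 hd'.le
    have hy : y = ((d / (1 - d) : ℝ) : ℂ) • x := by
      have hne : ((1 - d : ℝ) : ℂ) ≠ 0 := by exact_mod_cast hd'.ne'
      rw [Complex.ofReal_div, div_eq_inv_mul, mul_smul, hd, smul_smul, inv_mul_cancel₀ hne,
        one_smul]
    generalize d / (1 - d) = ω at hω hy
    have hu := isUnit_iff_ne_zero.mpr (hA ω hω)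
    have hx : x = (((ω : ℂ) • Complex.I • (1 : Matrix (Fin n) (Fin n) ℂ) - A)⁻¹ * B) *ᵥ w := by
      have h1 : ((ω : ℂ) • Complex.I • (1 : Matrix (Fin n) (Fin n) ℂ) - A) *ᵥ x = B *ᵥ w := by
        rw [sub_mulVec, smul_mulVec, smul_mulVec, one_mulVec, smul_comm, ← hy, ← hxy,
          add_sub_cancel_left]
      rw [← mulVec_mulVec, ← h1, mulVec_mulVec, nonsing_inv_mul _ hu, one_mulVec]
    refine key _ (hF ω hω) ?_ ?_
    · rw [kypF, fromRows_mulVec, one_mulVec, ← hx]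
    · rintro rfl
      rw [mulVec_zero] at hx
      subst hx
      simp at hv

theorem re_trace_mul_neg_of_frequency_inequality
    {M W : Matrix (Fin n ⊕ Fin m) (Fin n ⊕ Fin m) ℂ}
    (hA : ∀ ω : ℝ, 0 ≤ ω →
      ((ω : ℂ) • Complex.I • (1 : Matrix (Fin n) (Fin n) ℂ) - A).det ≠ 0)
    (hF : ∀ ω : ℝ, 0 ≤ ω → (-((kypF A B ω).conjTranspose * M * kypF A B ω)).PosDef)
    (hM22 : (-(M.submatrix Sum.inr Sum.inr)).PosDef)
    (hW : W.PosSemidef) (hW0 : W ≠ 0)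
    (hX : ∀ X : Matrix (Fin n) (Fin n) ℂ, X.IsHermitian → ((W * kypL A B X 0).trace).re = 0)
    (hY : ∀ Y : Matrix (Fin n) (Fin n) ℂ, Y.PosSemidef → 0 ≤ ((W * kypL A B 0 Y).trace).re) :
    ((W * M).trace).re < 0 := by
  obtain ⟨V, rfl⟩ := hW.exists_eq_mul_conjTranspose_s15
  obtain ⟨H, V₂, rfl⟩ : ∃ H V₂, V = fromRows H V₂ := ⟨_, _, (fromRows_toRows V).symm⟩
  obtain ⟨G, hG⟩ : ∃ G, A * H + B * V₂ = Complex.I • G :=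
    ⟨-(Complex.I • (A * H + B * V₂)), by
      rw [smul_neg, smul_smul, Complex.I_mul_I, neg_one_smul, neg_neg]⟩
  have htr : ∀ Z, (fromRows H V₂ * (fromRows H V₂)ᴴ * Z).trace =
      ((fromRows H V₂)ᴴ * Z * fromRows H V₂).trace := fun Z => by
    rw [Matrix.mul_assoc, trace_mul_comm]
  simp only [htr, conjTranspose_fromRows_mul_kypL_mul hG] at hX hY ⊢
  have hherm : (H * Gᴴ).IsHermitian := by
    set D := Complex.I • (G * Hᴴ - H * Gᴴ) with hD
    have hDh : Dᴴ = D := by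
      simp only [hD, conjTranspose_smul, conjTranspose_sub, conjTranspose_mul,
        conjTranspose_conjTranspose, RCLike.star_def, Complex.conj_I]
      module
    have h1 : (D * Dᴴ).trace = Complex.I • (Hᴴ * D * G - Gᴴ * D * H).trace := by
      rw [hDh, trace_sub, trace_mul_comm _ G, trace_mul_comm _ H, ← Matrix.mul_assoc,
        ← Matrix.mul_assoc, ← trace_sub, ← Matrix.sub_mul, ← trace_smul, ← Matrix.smul_mul]
    have h2 := hX D hDh
    simp only [Matrix.mul_zero, Matrix.zero_mul, add_zero, zero_add, trace_smul] at h2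
    rw [← h1] at h2
    have h3 : (D * Dᴴ).trace = 0 := by
      apply Complex.ext h2
      exact (Complex.nonneg_iff.mp (posSemidef_self_mul_conjTranspose D).trace_nonneg).2.symm
    rw [trace_mul_conjTranspose_self_eq_zero_iff, hD, smul_eq_zero_iff_right Complex.I_ne_zero,
      sub_eq_zero] at h3
    rw [IsHermitian, conjTranspose_mul, conjTranspose_conjTranspose, h3]
  have hpsd : (H * Gᴴ).PosSemidef := by
    refine .of_re_trace_mul_vecMulVec_nonneg hherm fun v => ?_
    have h1 := hY _ (posSemidef_vecMulVec_self_star v)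
    have h2 : G * Hᴴ = H * Gᴴ := by
      rw [← hherm.eq, conjTranspose_mul, conjTranspose_conjTranspose]
    simp only [Matrix.mul_zero, Matrix.zero_mul, sub_zero, smul_zero, add_zero, trace_add] at h1
    rw [trace_mul_comm _ H, trace_mul_comm _ G, ← Matrix.mul_assoc, ← Matrix.mul_assoc, h2,
      Complex.add_re] at h1
    linarith
  obtain ⟨U, d, hU, hd, hcol⟩ := hpsd.exists_unitary_columns_proportional
  have htrU : ((fromRows H V₂)ᴴ * M * fromRows H V₂).trace =
      ∑ k, star ((fromRows H V₂ * U).col k) ⬝ᵥ (M *ᵥ (fromRows H V₂ * U).col k) := by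
    calc _ = ((fromRows H V₂ * U)ᴴ * M * (fromRows H V₂ * U)).trace := by
          rw [conjTranspose_mul, ← Matrix.mul_assoc, trace_mul_comm _ U]
          simp only [← Matrix.mul_assoc, hU, Matrix.one_mul]
      _ = _ := by
          simp only [trace, diag, Matrix.mul_assoc]
          rfl
  have helim : ∀ k, (fromRows H V₂ * U).col k = Sum.elim ((H * U).col k) ((V₂ * U).col k) := by
    intro k
    rw [fromRows_mul]
    ext (i | i) <;> rfl
  have hneg : ∀ k, (fromRows H V₂ * U).col k ≠ 0 →
      (star ((fromRows H V₂ * U).col k) ⬝ᵥ (M *ᵥ (fromRows H V₂ * U).col k)).re < 0 := by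
    intro k hk
    rw [helim] at hk ⊢
    refine re_dotProduct_mulVec_neg_of_frequency_inequality hA hF hM22 (hd k).1 (hd k).2
      (y := (G * U).col k) ?_ (hcol k) hk
    have h1 : A * (H * U) + B * (V₂ * U) = Complex.I • (G * U) := by
      rw [← Matrix.mul_assoc, ← Matrix.mul_assoc, ← Matrix.add_mul, hG, Matrix.smul_mul]
    ext i
    exact congrFun (congrFun h1 i) k
  obtain ⟨k, hk⟩ : ∃ k, (fromRows H V₂ * U).col k ≠ 0 := by
    by_contra! h
    have h1 : fromRows H V₂ * U = 0 := by
      ext i k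
      exact congrFun (h k) i
    apply hW0
    rw [← Matrix.mul_one (fromRows H V₂), ← hU, ← Matrix.mul_assoc, h1, Matrix.zero_mul,
      Matrix.zero_mul]
  rw [htrU, Complex.re_sum]
  refine Finset.sum_neg' (fun k _ => ?_) ⟨k, Finset.mem_univ k, hneg k hk⟩
  by_cases h : (fromRows H V₂ * U).col k = 0
  · rw [h, mulVec_zero, dotProduct_zero, Complex.zero_re]
  · exact (hneg k h).le

end KYP

theorem nonneg_of_forall_pos_add_mul_pos {a b : ℝ} (h : ∀ t : ℝ, 0 < t → 0 < a + t * b) :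
    0 ≤ b := by
  by_contra! hb
  have h1 := h ((|a| + 1) / -b) (div_pos (by positivity) (by linarith))
  rw [div_neg, neg_mul, div_mul_cancel₀ _ hb.ne] at h1
  linarith [le_abs_self a]

theorem nonneg_left_of_forall_pos_add_mul_pos {a b : ℝ} (h : ∀ t : ℝ, 0 < t → 0 < a + t * b) :
    0 ≤ a := by
  refine nonneg_of_forall_pos_add_mul_pos (a := b) fun t ht => ?_
  have h1 := mul_pos ht (h t⁻¹ (inv_pos.mpr ht))
  rwa [mul_add, mul_inv_cancel_left₀ ht.ne', add_comm] at h1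

/-- Generalized KYP lemma for the nonnegative imaginary axis: equivalence between a
strict frequency-domain inequality for all `ω ≥ 0` (including `ω = ∞`, encoded by the
lower-right block condition) and the solvability of a linear matrix inequality with two
Hermitian unknowns `X` and `Y > 0`. -/
theorem generalized_kyp_lemma_nonneg_imaginary_axis {n m : ℕ}
    (A : Matrix (Fin n) (Fin n) ℂ) (B : Matrix (Fin n) (Fin m) ℂ)
    (M : Matrix (Fin n ⊕ Fin m) (Fin n ⊕ Fin m) ℂ) (hM : M.IsHermitian)
    (hA : ∀ ω : ℝ, 0 ≤ ω →
      ((ω : ℂ) • Complex.I • (1 : Matrix (Fin n) (Fin n) ℂ) - A).det ≠ 0) :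
    ((∀ ω : ℝ, 0 ≤ ω → (-((kypF A B ω).conjTranspose * M * kypF A B ω)).PosDef) ∧
      (-(M.submatrix Sum.inr Sum.inr)).PosDef) ↔
    ∃ X Y : Matrix (Fin n) (Fin n) ℂ, X.IsHermitian ∧ Y.IsHermitian ∧ Y.PosDef ∧
      (-((Matrix.fromBlocks A B (1 : Matrix (Fin n) (Fin n) ℂ) 0).conjTranspose *
          Matrix.fromBlocks 0 (X + Complex.I • Y) (X - Complex.I • Y) 0 *
          Matrix.fromBlocks A B (1 : Matrix (Fin n) (Fin n) ℂ) 0 + M)).PosDef := by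
  constructor
  · rintro ⟨hF, hM22⟩
    by_contra hcon
    set S : Set (Matrix (Fin n ⊕ Fin m) (Fin n ⊕ Fin m) ℂ) :=
      {L | ∃ X Y : Matrix (Fin n) (Fin n) ℂ, X.IsHermitian ∧ Y.PosDef ∧ L = kypL A B X Y + M}
    have hS : Convex ℝ S := by
      refine convex_iff_forall_pos.mpr ?_
      rintro _ ⟨X, Y, hX, hY, rfl⟩ _ ⟨X', Y', hX', hY', rfl⟩ a b ha hb hab
      refine ⟨a • X + b • X', a • Y + b • Y',
        (hX.smul (IsSelfAdjoint.all a)).add (hX'.smul (IsSelfAdjoint.all b)),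
        (hY.smul ha).add (hY'.smul hb), ?_⟩
      rw [kypL_add, kypL_smul, kypL_smul, smul_add, smul_add, add_add_add_comm, ← add_smul, hab,
        one_smul]
    obtain ⟨W, hWh, hW⟩ := exists_isHermitian_forall_re_trace_pos hS
      (by
        rintro _ ⟨X, Y, hX, hY, rfl⟩
        exact (kypL_isHermitian A B hX hY.isHermitian).add hM)
      (by
        rintro _ ⟨X, Y, hX, hY, rfl⟩ h
        exact hcon ⟨X, Y, hX, hY.isHermitian, hY, h⟩)
    have hpos : ∀ (X Y : Matrix (Fin n) (Fin n) ℂ)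
        (Q : Matrix (Fin n ⊕ Fin m) (Fin n ⊕ Fin m) ℂ), X.IsHermitian → Y.PosDef → Q.PosDef →
        0 < ((W * kypL A B X Y).trace).re + ((W * M).trace).re + ((W * Q).trace).re := by
      intro X Y Q hX hY hQ
      simpa [Matrix.mul_add] using hW _ ⟨X, Y, hX, hY, rfl⟩ Q hQ
    have hW0 : W ≠ 0 := by
      rintro rfl
      simpa using hpos 0 1 1 isHermitian_zero .one .one
    have hlin : ∀ (X Y X' Y' : Matrix (Fin n) (Fin n) ℂ) (t : ℝ),
        ((W * kypL A B (X + t • X') (Y + t • Y')).trace).re =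
          ((W * kypL A B X Y).trace).re + t * ((W * kypL A B X' Y').trace).re := by
      intro X Y X' Y' t
      simp [kypL_add, kypL_smul, Matrix.mul_add]
    have hXn : ∀ X : Matrix (Fin n) (Fin n) ℂ, X.IsHermitian →
        0 ≤ ((W * kypL A B X 0).trace).re := by
      intro X hX
      refine nonneg_of_forall_pos_add_mul_pos
        (a := ((W * kypL A B 0 1).trace).re + ((W * M).trace).re + ((W * 1).trace).re)
        fun t _ => ?_
      have h1 := hpos (0 + t • X) (1 + t • 0) 1
        (isHermitian_zero.add (hX.smul (IsSelfAdjoint.all t))) (by simp [PosDef.one]) .one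
      rw [hlin] at h1
      linarith
    refine (re_trace_mul_neg_of_frequency_inequality hA hF hM22 ?_ hW0 ?_ ?_).not_ge ?_
    · refine .of_re_trace_mul_vecMulVec_nonneg hWh fun v => ?_
      refine nonneg_of_forall_pos_add_mul_pos
        (a := ((W * kypL A B 0 1).trace).re + ((W * M).trace).re + ((W * 1).trace).re)
        fun t ht => ?_
      have h1 := hpos 0 1 (1 + t • vecMulVec v (star v)) isHermitian_zero .one
        (PosDef.one.add_posSemidef ((posSemidef_vecMulVec_self_star v).smul ht.le))
      simp only [Matrix.mul_add, Matrix.mul_smul, trace_add, trace_smul, Complex.add_re,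
        Complex.smul_re, smul_eq_mul] at h1
      linarith
    · intro X hX
      refine le_antisymm ?_ (hXn X hX)
      have h1 := hXn _ hX.neg
      have h2 := hlin 0 0 (-X) 0 1
      have h3 := hlin X 0 (-X) 0 1
      simp only [zero_add, one_smul, smul_zero, add_zero, add_neg_cancel, one_mul] at h2 h3
      linarith
    · intro Y hY
      refine nonneg_of_forall_pos_add_mul_pos
        (a := ((W * kypL A B 0 1).trace).re + ((W * M).trace).re + ((W * 1).trace).re)
        fun t ht => ?_
      have h1 := hpos (0 + t • 0) (1 + t • Y) 1 (by simp)
        (PosDef.one.add_posSemidef (hY.smul ht.le)) .one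
      rw [hlin] at h1
      linarith
    · refine nonneg_left_of_forall_pos_add_mul_pos
        (b := ((W * kypL A B 0 1).trace).re + ((W * 1).trace).re) fun t ht => ?_
      have h1 := hpos (t • 0) (t • 1) (t • 1) (by simp)
        (PosDef.one.smul ht) (PosDef.one.smul ht)
      simp only [kypL_smul, Matrix.mul_smul, trace_smul, Complex.smul_re, smul_eq_mul] at h1
      linarith
  · rintro ⟨X, Y, hX, -, hY, h⟩
    refine ⟨fun ω hω => kyp_frequency_inequality_of_posDef h (mul_kypF_resolvent (hA ω hω)) ?_ ?_,
      ?_⟩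
    · simp
    · simp only [conjTranspose_smul, Matrix.smul_mul, Matrix.mul_smul, RCLike.star_def,
        Complex.conj_ofReal, ← smul_add]
      have h1 := hY.posSemidef.conjTranspose_mul_mul_same
        (((ω : ℂ) • Complex.I • (1 : Matrix (Fin n) (Fin n) ℂ) - A)⁻¹ * B)
      exact (h1.add h1).smul (Complex.zero_le_real.mpr hω)
    · rw [submatrix_inr_eq]
      refine kyp_frequency_inequality_of_posDef h (R := 0) (G := -(Complex.I • B)) ?_ ?_ ?_
      · rw [Matrix.mul_zero, zero_add, smul_neg, smul_smul, Complex.I_mul_I, neg_one_smul, neg_neg]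
      · simp
      · simpa using PosSemidef.zero
end

section
/- (Sectored real lemma, Theorem 2) Let A, B, C, D be real matrices of sizes n×n, n×m, m×n, m×m with A Hurwitz stable, (A,B) controllable (the n×(nm) matrix [B, AB, …, A^{n−1}B] has rank n) and (C,A) observable ([Cᵀ, AᵀCᵀ, …, (Aᵀ)^{n−1}Cᵀ] has rank n), let α ∈ Set.Ioc 0 (π/2), set η = π/2 − α and e = Complex.exp(η*Complex.I), and let G(s) = C(s•1 − A)⁻¹B + D over ℂ. Then the following are equivalent: (a) Φ∞(G) < α, i.e., for every ω ∈ ℝ the Hermitian matrix e • G(ω*I) + (star e) • (G(ω*I))ᴴ is positive definite, and e • (D:Matrix _ _ ℂ) + (star e) • (Dᵀ:Matrix _ _ ℂ) is positive definite; (b) there exists a Hermitian X ∈ Matrix (Fin n) (Fin n) ℂ with X.PosDef such that −Matrix.fromBlocks (Aᵀ*X + X*A) (X*B − (star e)•Cᵀ) (Bᵀ*X − e•C) (−(e•D + (star e)•Dᵀ)) is positive definite (all real matrices coerced to ℂ). -/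
open Matrix
open scoped ComplexOrder Real

/-- The transfer function `G(s) = C (sI - A)⁻¹ B + D` of a real state-space system,
with all matrices coerced to `ℂ`. -/
noncomputable def transferFunction {n m : ℕ} (A : Matrix (Fin n) (Fin n) ℝ)
    (B : Matrix (Fin n) (Fin m) ℝ) (C : Matrix (Fin m) (Fin n) ℝ)
    (D : Matrix (Fin m) (Fin m) ℝ) (s : ℂ) : Matrix (Fin m) (Fin m) ℂ :=
  C.map Complex.ofReal * (s • (1 : Matrix (Fin n) (Fin n) ℂ) - A.map Complex.ofReal)⁻¹ *
    B.map Complex.ofReal + D.map Complex.ofReal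

/-- A real square matrix is Hurwitz stable if all its complex eigenvalues have
negative real part. -/
def IsHurwitz {n : ℕ} (A : Matrix (Fin n) (Fin n) ℝ) : Prop :=
  ∀ μ ∈ spectrum ℂ (A.map Complex.ofReal), μ.re < 0

/-- The controllability matrix `[B, AB, …, A^{n-1}B]` of the pair `(A, B)`. -/
def ctrbMatrix {n m : ℕ} (A : Matrix (Fin n) (Fin n) ℝ) (B : Matrix (Fin n) (Fin m) ℝ) :
    Matrix (Fin n) (Fin n × Fin m) ℝ :=
  Matrix.of fun i p => (A ^ (p.1 : ℕ) * B) i p.2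

open Topology Filter in
theorem Matrix.isOpen_setOf_re_dotProduct_mulVec_neg {N : Type*} [Fintype N] :
    IsOpen {M : Matrix N N ℂ | ∀ v ≠ 0, (star v ⬝ᵥ M *ᵥ v).re < 0} := by
  have hsphere : {M : Matrix N N ℂ | ∀ v ≠ 0, (star v ⬝ᵥ M *ᵥ v).re < 0} =
      {M | ∀ v ∈ Metric.sphere (0 : N → ℂ) 1, (star v ⬝ᵥ M *ᵥ v).re < 0} := by
    ext M
    refine ⟨fun h v hv => h v (ne_zero_of_mem_unit_sphere ⟨v, hv⟩), fun h v hv => ?_⟩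
    have hn : ‖v‖ ≠ 0 := norm_ne_zero_iff.mpr hv
    have hs := h ((‖v‖⁻¹ : ℝ) • v) (by simp [norm_smul, hn])
    have hscale : (star ((‖v‖⁻¹ : ℝ) • v) ⬝ᵥ M *ᵥ ((‖v‖⁻¹ : ℝ) • v)).re =
        ‖v‖⁻¹ * (‖v‖⁻¹ * (star v ⬝ᵥ M *ᵥ v).re) := by
      rw [star_smul, mulVec_smul, dotProduct_smul, smul_dotProduct]
      simp
    rw [hscale] at hs
    have hp : 0 < ‖v‖⁻¹ := by positivity
    exact neg_of_mul_neg_right (neg_of_mul_neg_right hs hp.le) hp.le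
  rw [hsphere, isOpen_iff_mem_nhds]
  intro M hM
  refine (isCompact_sphere (0 : N → ℂ) 1).eventually_forall_of_forall_eventually
    (P := fun M v => (star v ⬝ᵥ M *ᵥ v).re < 0) fun v hv => ?_
  have hcont : Continuous fun z : Matrix N N ℂ × (N → ℂ) => (star z.2 ⬝ᵥ z.1 *ᵥ z.2).re := by
    fun_prop
  exact hcont.continuousAt.eventually (gt_mem_nhds (hM v hv))

theorem LinearMap.exists_eq_trace_mul {N : Type*} [Fintype N] [DecidableEq N]
    (f : Matrix N N ℂ →ₗ[ℂ] ℂ) : ∃ W : Matrix N N ℂ, ∀ M, f M = (W * M).trace := by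
  refine ⟨of fun i j => f (Matrix.single j i 1), fun M => ?_⟩
  have hentry : ∀ i j, f (Matrix.single i j (M i j)) = f (Matrix.single i j 1) * M i j := by
    intro i j
    rw [mul_comm, ← smul_eq_mul, ← map_smul, smul_single, smul_eq_mul, mul_one]
  conv_lhs => rw [matrix_eq_sum_single M]
  simp_rw [map_sum, hentry]
  rw [Finset.sum_comm]
  rfl

theorem Matrix.exists_posSemidef_of_forall_not_posDef {N : Type*} [Fintype N] [DecidableEq N]
    {Θ : Matrix N N ℂ} (hΘ : Θ.IsHermitian) (S : Submodule ℝ (Matrix N N ℂ))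
    (hS : ∀ L ∈ S, L.IsHermitian) (h : ∀ L ∈ S, ¬ (-(Θ + L)).PosDef) :
    ∃ W : Matrix N N ℂ, W.PosSemidef ∧ W ≠ 0 ∧ (∀ L ∈ S, (W * L).trace = 0) ∧
      0 ≤ (W * Θ).trace.re := by
  set s := {M : Matrix N N ℂ | ∀ v ≠ 0, (star v ⬝ᵥ M *ᵥ v).re < 0} with hs
  have hadd : ∀ (a b : ℝ) (M K : Matrix N N ℂ) (v : N → ℂ),
      (star v ⬝ᵥ (a • M + b • K) *ᵥ v).re =
        a * (star v ⬝ᵥ M *ᵥ v).re + b * (star v ⬝ᵥ K *ᵥ v).re := by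
    intro a b M K v
    simp [add_mulVec, smul_mulVec, dotProduct_add, dotProduct_smul]
  have hconv : Convex ℝ s := by
    intro M hM K hK a b ha hb hab v hv
    rw [hadd]
    have h1 := hM v hv
    have h2 := hK v hv
    rcases ha.eq_or_lt with rfl | ha
    · have : b = 1 := by linarith
      subst this; linarith
    · nlinarith
  have hone : ∀ v : N → ℂ, v ≠ 0 → 0 < (star v ⬝ᵥ v).re := fun v hv =>
    (Complex.pos_iff.mp (dotProduct_star_self_pos_iff.mpr hv)).1
  obtain ⟨f, u, hfs, hft⟩ := RCLike.geometric_hahn_banach_open (𝕜 := ℂ) hconv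
    isOpen_setOf_re_dotProduct_mulVec_neg
    (t := (fun L => Θ + L) '' (S : Set (Matrix N N ℂ)))
    (S.convex.translate Θ) (by
      rw [Set.disjoint_right]
      rintro _ ⟨L, hL, rfl⟩ hneg
      refine h L hL (PosDef.of_dotProduct_mulVec_pos (hΘ.add (hS L hL)).neg fun v hv => ?_)
      have hH : (-(Θ + L)).IsHermitian := (hΘ.add (hS L hL)).neg
      rw [Complex.pos_iff]
      refine ⟨?_, (hH.im_star_dotProduct_mulVec_self v).symm⟩
      have := hneg v hv
      rw [neg_mulVec, dotProduct_neg, Complex.neg_re]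
      linarith)
  obtain ⟨W, hW⟩ := f.toLinearMap.exists_eq_trace_mul
  replace hW : ∀ M, f M = (W * M).trace := hW
  replace hfs : ∀ M ∈ s, (f M).re < u := hfs
  replace hft : ∀ L ∈ S, u ≤ (f Θ).re + (f L).re := fun L hL => by
    simpa using hft _ ⟨L, hL, rfl⟩
  have hsmul : ∀ (k : ℝ) (M : Matrix N N ℂ), (f (k • M)).re = k * (f M).re := fun k M => by
    rw [← Complex.coe_smul, map_smul]; simp
  have hcone : ∀ M ∈ s, ∀ k : ℝ, 0 < k → k * (f M).re < u := by
    intro M hM k hk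
    rw [← hsmul]
    refine hfs _ fun v hv => ?_
    have := hadd k 0 M 0 v
    rw [zero_smul, zero_mul, add_zero, add_zero] at this
    rw [this]
    exact mul_neg_of_pos_of_neg hk (hM v hv)
  have hnonpos : ∀ M ∈ s, (f M).re ≤ 0 := by
    intro M hM
    by_contra! hpos
    have := hcone M hM ((|u| + 1) / (f M).re) (by positivity)
    rw [div_mul_cancel₀ _ hpos.ne'] at this
    linarith [le_abs_self u]
  have hmone : (-1 : Matrix N N ℂ) ∈ s := fun v hv => by
    rw [neg_mulVec, one_mulVec, dotProduct_neg, Complex.neg_re]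
    linarith [hone v hv]
  have hu : 0 ≤ u := by
    by_contra! hneg
    have hle := hnonpos _ hmone
    have := hcone _ hmone (u / ((f (-1)).re - 1)) (div_pos_of_neg_of_neg hneg (by linarith))
    rw [div_mul_eq_mul_div, div_lt_iff_of_neg (by linarith)] at this
    linarith
  have hSzero : ∀ L ∈ S, (f L).re = 0 := by
    intro L hL
    by_contra hne
    have := hft _ (S.smul_mem (-((f Θ).re - u + 1) / (f L).re) hL)
    rw [hsmul, div_mul_cancel₀ _ hne] at this
    linarith
  have hΘ_le : u ≤ (f Θ).re := by simpa using hft 0 S.zero_mem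
  have htrace : ∀ M : Matrix N N ℂ, M.IsHermitian →
      ((W + Wᴴ) * M).trace = ((2 * (f M).re : ℝ) : ℂ) := by
    intro M hM
    have hstar : (Wᴴ * M).trace = star (W * M).trace := by
      rw [← trace_conjTranspose, conjTranspose_mul, hM.eq, trace_mul_comm]
    rw [add_mul, trace_add, hstar, hW]
    exact Complex.add_conj _
  have hrank : ∀ v : N → ℂ, 0 ≤ (f (vecMulVec v (star v))).re := by
    intro v
    by_contra! hneg
    have key : ∀ ε : ℝ, 0 < ε →
        -(f (vecMulVec v (star v))).re + ε * (f (-1)).re ≤ 0 := by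
      intro ε hε
      have hmem : (-1 : ℝ) • vecMulVec v (star v) + ε • (-1 : Matrix N N ℂ) ∈ s := by
        intro x hx
        have h1 := hmone x hx
        have h2 := (posSemidef_vecMulVec_self_star v).re_dotProduct_nonneg x
        rw [hadd]
        simp only [RCLike.re_to_complex] at h2
        nlinarith
      have := hnonpos _ hmem
      rw [map_add, Complex.add_re, hsmul, hsmul] at this
      linarith
    have hle := hnonpos _ hmone
    have := key (-(f (vecMulVec v (star v))).re / (2 * (1 - (f (-1)).re)))
      (div_pos (by linarith) (by linarith))
    rw [div_mul_eq_mul_div, ← sub_neg_eq_add, sub_nonpos, ← neg_div,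
      le_div_iff₀ (by linarith)] at this
    nlinarith
  refine ⟨W + Wᴴ, PosSemidef.of_dotProduct_mulVec_nonneg (isHermitian_add_transpose_self W)
    fun v => ?_, ?_, fun L hL => ?_, ?_⟩
  · have : star v ⬝ᵥ (W + Wᴴ) *ᵥ v = ((W + Wᴴ) * vecMulVec v (star v)).trace := by
      rw [mul_vecMulVec, trace_vecMulVec, dotProduct_comm]
    rw [this, htrace _ (posSemidef_vecMulVec_self_star v).isHermitian]
    exact_mod_cast mul_nonneg zero_le_two (hrank v)
  · intro hzero
    have h1 := htrace Θ hΘ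
    have h2 := htrace (-1) isHermitian_one.neg
    rw [hzero, zero_mul, trace_zero, eq_comm, Complex.ofReal_eq_zero] at h1 h2
    linarith [hfs _ hmone]
  · rw [htrace L (hS L hL), hSzero L hL]; simp
  · rw [htrace Θ hΘ, Complex.ofReal_re]
    linarith

theorem LinearMap.exists_orthonormalBasis_apply_eq_smul {r : ℕ} {E : Type*} [NormedAddCommGroup E]
    [InnerProductSpace ℂ E] [FiniteDimensional ℂ E] (hr : Module.finrank ℂ E = r)
    (T : E →ₗ[ℂ] E) (hT : IsStarNormal T) :
    ∃ (b : OrthonormalBasis (Fin r) ℂ E) (μ : Fin r → ℂ), ∀ k, T (b k) = μ k • b k := by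
  classical
  set H : E →ₗ[ℂ] E := (realPart T : E →ₗ[ℂ] E) with hH
  set K : E →ₗ[ℂ] E := (imaginaryPart T : E →ₗ[ℂ] E) with hK
  have hHs : H.IsSymmetric := (LinearMap.isSymmetric_iff_isSelfAdjoint _).mpr (realPart T).2
  have hKs : K.IsSymmetric := (LinearMap.isSymmetric_iff_isSelfAdjoint _).mpr (imaginaryPart T).2
  have hcomm : Commute H K := isStarNormal_iff_commute_realPart_imaginaryPart.mp hT
  have hint := LinearMap.IsSymmetric.directSum_isInternal_of_commute hHs hKs hcomm
  have hfam := LinearMap.IsSymmetric.orthogonalFamily_eigenspace_inf_eigenspace hHs hKs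
  have hint' := DirectSum.isInternal_ne_bot_iff.mpr hint
  let := hfam.independent.fintypeNeBotOfFiniteDimensional
  have hfam' := hfam.comp
    (γ := {i : ℂ × ℂ // Module.End.eigenspace H i.2 ⊓ Module.End.eigenspace K i.1 ≠ ⊥})
    Subtype.val_injective
  refine ⟨hint'.subordinateOrthonormalBasis hr hfam', fun k =>
    (hint'.subordinateOrthonormalBasisIndex hr k hfam').1.2 + Complex.I *
    (hint'.subordinateOrthonormalBasisIndex hr k hfam').1.1, fun k => ?_⟩
  obtain ⟨h1, h2⟩ := hint'.subordinateOrthonormalBasis_subordinate hr k hfam'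
  rw [SetLike.mem_coe, Module.End.mem_eigenspace_iff] at h1 h2
  conv_lhs => rw [← realPart_add_I_smul_imaginaryPart T]
  rw [LinearMap.add_apply, LinearMap.smul_apply, ← hH, ← hK, h1, h2, add_smul, mul_smul]

theorem LinearMap.exists_linearIsometry_comp_eq {E F : Type*} [AddCommGroup E] [Module ℂ E]
    [NormedAddCommGroup F]
    [InnerProductSpace ℂ F] [FiniteDimensional ℂ F] (M N : E →ₗ[ℂ] F)
    (h : ∀ x, ‖M x‖ = ‖N x‖) : ∃ T : F →ₗᵢ[ℂ] F, ∀ x, T (N x) = M x := by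
  have hker : N.ker ≤ M.ker := fun x hx => by
    rw [LinearMap.mem_ker, ← norm_eq_zero, h, norm_eq_zero, ← LinearMap.mem_ker]; exact hx
  let L : N.range →ₗ[ℂ] F := (N.ker.liftQ M hker) ∘ₗ N.quotKerEquivRange.symm.toLinearMap
  have hL : ∀ x, L ⟨N x, N.mem_range_self x⟩ = M x := by
    intro x
    have : N.quotKerEquivRange.symm ⟨N x, N.mem_range_self x⟩ = N.ker.mkQ x :=
      N.quotKerEquivRange_symm_apply_image x _
    simp [L, this]
  refine ⟨LinearIsometry.extend ⟨L, ?_⟩, fun x => ?_⟩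
  · rintro ⟨_, x, rfl⟩
    rw [hL, h]; rfl
  · exact (LinearIsometry.extend_apply _ ⟨N x, N.mem_range_self x⟩).trans (hL x)

theorem LinearIsometry.adjoint_toLinearMap_mul_self {F : Type*} [NormedAddCommGroup F]
    [InnerProductSpace ℂ F] [FiniteDimensional ℂ F] (T : F →ₗᵢ[ℂ] F) :
    LinearMap.adjoint T.toLinearMap * T.toLinearMap = 1 := by
  ext1 x
  refine ext_inner_left ℂ fun y => ?_
  rw [Module.End.mul_apply, LinearMap.adjoint_inner_right, Module.End.one_apply]
  exact T.inner_map_map y x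

theorem LinearIsometry.isStarNormal {F : Type*} [NormedAddCommGroup F]
    [InnerProductSpace ℂ F] [FiniteDimensional ℂ F] (T : F →ₗᵢ[ℂ] F) :
    IsStarNormal T.toLinearMap :=
  ⟨T.adjoint_toLinearMap_mul_self.trans (mul_eq_one_comm.mp T.adjoint_toLinearMap_mul_self).symm⟩

theorem Matrix.norm_sq_toEuclideanLin_conjTranspose {n r : Type*} [Fintype n] [DecidableEq n]
    [Fintype r] [DecidableEq r] (K : Matrix n r ℂ) (x : EuclideanSpace ℂ n) :
    ((‖toEuclideanLin Kᴴ x‖ ^ 2 : ℝ) : ℂ) = star x.ofLp ⬝ᵥ (K * Kᴴ) *ᵥ x.ofLp := by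
  rw [Complex.ofReal_pow, ← Complex.coe_algebraMap, ← inner_self_eq_norm_sq_to_K (𝕜 := ℂ),
    EuclideanSpace.inner_eq_star_dotProduct,
    ofLp_toLpLin, toLin'_apply, star_mulVec, conjTranspose_conjTranspose, dotProduct_comm,
    ← dotProduct_mulVec, mulVec_mulVec]

theorem Matrix.exists_orthonormalBasis_mulVec_eq_smul_mulVec {n r : Type*} [Fintype n]
    [DecidableEq n] [Fintype r] [DecidableEq r] {M N : Matrix n r ℂ} (h : M * Mᴴ = N * Nᴴ) :
    ∃ (b : OrthonormalBasis (Fin (Fintype.card r)) ℂ (EuclideanSpace ℂ r))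
      (μ : Fin (Fintype.card r) → ℂ),
      ∀ k, ‖μ k‖ = 1 ∧ M *ᵥ b k = μ k • N *ᵥ b k := by
  have hnorm : ∀ x, ‖toEuclideanLin Mᴴ x‖ = ‖toEuclideanLin Nᴴ x‖ := by
    intro x
    have : ((‖toEuclideanLin Mᴴ x‖ ^ 2 : ℝ) : ℂ) = (‖toEuclideanLin Nᴴ x‖ ^ 2 : ℝ) := by
      rw [norm_sq_toEuclideanLin_conjTranspose, norm_sq_toEuclideanLin_conjTranspose, h]
    exact (sq_eq_sq₀ (norm_nonneg _) (norm_nonneg _)).mp (by exact_mod_cast this)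
  obtain ⟨T, hT⟩ := LinearMap.exists_linearIsometry_comp_eq _ _ hnorm
  obtain ⟨b, μ, hb⟩ := T.toLinearMap.exists_orthonormalBasis_apply_eq_smul
    finrank_euclideanSpace T.isStarNormal
  have hμ : ∀ k, ‖μ k‖ = 1 := fun k => by
    have := congrArg norm (hb k)
    simpa [norm_smul, b.orthonormal.1 k] using this.symm
  have hadj : toEuclideanLin M = toEuclideanLin N ∘ₗ LinearMap.adjoint T.toLinearMap := by
    have hTN : T.toLinearMap ∘ₗ toEuclideanLin Nᴴ = toEuclideanLin Mᴴ := LinearMap.ext hT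
    have := congrArg LinearMap.adjoint hTN
    rw [LinearMap.adjoint_comp, ← toEuclideanLin_conjTranspose_eq_adjoint,
      ← toEuclideanLin_conjTranspose_eq_adjoint, conjTranspose_conjTranspose,
      conjTranspose_conjTranspose] at this
    exact this.symm
  refine ⟨b, fun k => (μ k)⁻¹, fun k => ⟨by simp [hμ k], ?_⟩⟩
  have hμ0 : μ k ≠ 0 := fun h0 => by simpa [h0] using hμ k
  have hinv : LinearMap.adjoint T.toLinearMap (b k) = (μ k)⁻¹ • b k := by
    have := LinearMap.congr_fun T.adjoint_toLinearMap_mul_self (b k)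
    rw [Module.End.mul_apply, hb, map_smul, Module.End.one_apply] at this
    rw [eq_inv_smul_iff₀ hμ0, this]
  have := LinearMap.congr_fun hadj (b k)
  rw [LinearMap.comp_apply, hinv, map_smul] at this
  simpa using congrArg WithLp.ofLp this

section KalmanYakubovichPopov

variable {n m : Type*} [Fintype n] [Fintype m]
  {A : Matrix n n ℂ} {B : Matrix n m ℂ} {C : Matrix m n ℂ} {D : Matrix m m ℂ}

theorem Matrix.star_dotProduct_fromBlocks_mulVec (x : n → ℂ) (u : m → ℂ) :
    star (Sum.elim x u) ⬝ᵥ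
        fromBlocks 0 (-Cᴴ) (-C) (-(D + Dᴴ)) *ᵥ Sum.elim x u =
      -(star u ⬝ᵥ (C *ᵥ x + D *ᵥ u) + star (C *ᵥ x + D *ᵥ u) ⬝ᵥ u) := by
  have hstar : star (Sum.elim x u) = Sum.elim (star x) (star u) := by
    ext (i | i) <;> rfl
  have hC : star x ⬝ᵥ Cᴴ *ᵥ u = star (C *ᵥ x) ⬝ᵥ u := by
    rw [star_mulVec, dotProduct_mulVec]
  have hD : star u ⬝ᵥ Dᴴ *ᵥ u = star (D *ᵥ u) ⬝ᵥ u := by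
    rw [star_mulVec, dotProduct_mulVec]
  rw [fromBlocks_mulVec, hstar, sumElim_dotProduct_sumElim]
  simp only [Sum.elim_comp_inl, Sum.elim_comp_inr, zero_mulVec, zero_add, neg_mulVec, add_mulVec,
    dotProduct_neg, dotProduct_add, star_add, add_dotProduct, hC, hD]
  ring

theorem Matrix.star_dotProduct_add_conjTranspose_mulVec (G : Matrix m m ℂ) (u : m → ℂ) :
    star u ⬝ᵥ (G + Gᴴ) *ᵥ u = star u ⬝ᵥ G *ᵥ u + star (G *ᵥ u) ⬝ᵥ u := by
  rw [add_mulVec, dotProduct_add, star_mulVec, ← dotProduct_mulVec]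

theorem Matrix.mul_conjTranspose_add_eq_zero {r : Type*} [Fintype r] {P Q : Matrix n r ℂ}
    (h : ∀ X : Matrix n n ℂ, X.IsHermitian → (Qᴴ * X * P + Pᴴ * X * Q).trace = 0) :
    P * Qᴴ + Q * Pᴴ = 0 := by
  set Y := P * Qᴴ + Q * Pᴴ with hY
  have hYH : Yᴴ = Y := by
    simp [hY, add_comm]
  rw [← trace_conjTranspose_mul_self_eq_zero_iff, hYH]
  rw [← h Y hYH, trace_add, Matrix.mul_assoc, trace_mul_comm Qᴴ, Matrix.mul_assoc Pᴴ,
    trace_mul_comm Pᴴ, Matrix.mul_assoc, Matrix.mul_assoc Y, ← trace_add, ← Matrix.mul_add, ← hY]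

variable [DecidableEq n]

theorem Matrix.isUnit_smul_one_sub_of_spectrum_re_neg (hA : ∀ μ ∈ spectrum ℂ A, μ.re < 0) {s : ℂ}
    (hs : 0 ≤ s.re) : IsUnit (s • (1 : Matrix n n ℂ) - A) := by
  by_contra h
  refine (hA s ?_).not_ge hs
  rwa [spectrum.mem_iff, Algebra.algebraMap_eq_smul_one]

theorem Matrix.eq_resolvent_mulVec (hA : ∀ μ ∈ spectrum ℂ A, μ.re < 0) {s : ℂ} (hs : 0 ≤ s.re)
    {x y : n → ℂ} : A *ᵥ x + y = s • x ↔ x = (s • (1 : Matrix n n ℂ) - A)⁻¹ *ᵥ y := by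
  have hdet := (isUnit_iff_isUnit_det _).mp (isUnit_smul_one_sub_of_spectrum_re_neg hA hs)
  have hsub : A *ᵥ x + y = s • x ↔ (s • (1 : Matrix n n ℂ) - A) *ᵥ x = y := by
    rw [sub_mulVec, smul_mulVec, one_mulVec, sub_eq_iff_eq_add', eq_comm]
  rw [hsub]
  constructor
  · rintro rfl
    rw [mulVec_mulVec, nonsing_inv_mul _ hdet, one_mulVec]
  · rintro rfl
    rw [mulVec_mulVec, mul_nonsing_inv _ hdet, one_mulVec]

theorem Matrix.star_dotProduct_fromBlocks_mulVec_of_mulVec_add_eq_smul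
    (hA : ∀ μ ∈ spectrum ℂ A, μ.re < 0)
    {s : ℂ} (hs : 0 ≤ s.re) {x : n → ℂ} {u : m → ℂ} (h : A *ᵥ x + B *ᵥ u = s • x) :
    star (Sum.elim x u) ⬝ᵥ
        fromBlocks 0 (-Cᴴ) (-C) (-(D + Dᴴ)) *ᵥ Sum.elim x u =
      -(star u ⬝ᵥ ((C * (s • (1 : Matrix n n ℂ) - A)⁻¹ * B + D) +
        (C * (s • (1 : Matrix n n ℂ) - A)⁻¹ * B + D)ᴴ) *ᵥ u) := by
  rw [star_dotProduct_fromBlocks_mulVec, star_dotProduct_add_conjTranspose_mulVec, add_mulVec,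
    ← mulVec_mulVec, ← mulVec_mulVec, ← (eq_resolvent_mulVec hA hs).mp h]

theorem Matrix.re_star_dotProduct_fromBlocks_mulVec_neg (hA : ∀ μ ∈ spectrum ℂ A, μ.re < 0)
    (hG : ∀ ω : ℝ, ((C * (((ω : ℂ) * Complex.I) • (1 : Matrix n n ℂ) - A)⁻¹ * B + D) +
        (C * (((ω : ℂ) * Complex.I) • (1 : Matrix n n ℂ) - A)⁻¹ * B + D)ᴴ).PosDef)
    (hD : (D + Dᴴ).PosDef) {x : n → ℂ} {u : m → ℂ} {μ : ℂ} (hμ : ‖μ‖ = 1)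
    (h : (A *ᵥ x + B *ᵥ u) + x = μ • ((A *ᵥ x + B *ᵥ u) - x)) (hf : Sum.elim x u ≠ 0) :
    (star (Sum.elim x u) ⬝ᵥ
      fromBlocks 0 (-Cᴴ) (-C) (-(D + Dᴴ)) *ᵥ Sum.elim x u).re < 0 := by
  rcases eq_or_ne μ 1 with rfl | hμ1
  · have hx : x = 0 := by
      rw [one_smul, sub_eq_add_neg] at h
      exact self_eq_neg.mp (add_left_cancel h)
    subst hx
    have hu : u ≠ 0 := by
      rintro rfl
      exact hf (by ext (i | i) <;> rfl)
    rw [star_dotProduct_fromBlocks_mulVec, mulVec_zero, zero_add,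
      ← star_dotProduct_add_conjTranspose_mulVec, Complex.neg_re, neg_lt_zero]
    exact hD.re_dotProduct_pos hu
  · have hμ1' : μ - 1 ≠ 0 := sub_ne_zero.mpr hμ1
    set c := (μ + 1) / (μ - 1) with hc
    have hcre : c.re = 0 := by
      have hn : μ.re * μ.re + μ.im * μ.im = 1 := by
        rw [← Complex.normSq_apply, Complex.normSq_eq_norm_sq, hμ, one_pow]
      rw [hc, Complex.div_re, ← add_div]
      simp only [Complex.add_re, Complex.sub_re, Complex.one_re, Complex.add_im, Complex.sub_im,
        Complex.one_im]
      rw [div_eq_zero_iff]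
      left
      linarith
    have hcI : c = (c.im : ℂ) * Complex.I := by
      apply Complex.ext <;> simp [hcre]
    have hp : A *ᵥ x + B *ᵥ u = c • x := by
      have : (μ - 1) • (A *ᵥ x + B *ᵥ u) = (μ + 1) • x := by
        rw [sub_smul, add_smul, one_smul, one_smul, sub_eq_iff_eq_add]
        rw [smul_sub, eq_sub_iff_add_eq] at h
        rw [← h]
        abel
      rw [hc, div_eq_inv_mul, mul_smul, ← this, inv_smul_smul₀ hμ1']
    have hu : u ≠ 0 := by
      rintro rfl
      have hx := (eq_resolvent_mulVec hA hcre.ge).mp hp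
      rw [mulVec_zero, mulVec_zero] at hx
      subst hx
      exact hf (by ext (i | i) <;> rfl)
    rw [star_dotProduct_fromBlocks_mulVec_of_mulVec_add_eq_smul hA hcre.ge hp, Complex.neg_re,
      neg_lt_zero, hcI]
    exact (hG c.im).re_dotProduct_pos hu

variable (A B) in
/-- The real subspace of Hermitian matrices `Jᴴ X K + Kᴴ X J` with `X` Hermitian,
`J = [1, 0]` and `K = [A, B]`. -/
def lyapunovSubmodule : Submodule ℝ (Matrix (n ⊕ m) (n ⊕ m) ℂ) where
  carrier := {L | ∃ X : Matrix n n ℂ, X.IsHermitian ∧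
    L = fromBlocks (Aᴴ * X + X * A) (X * B) (Bᴴ * X) 0}
  add_mem' := by
    rintro _ _ ⟨X, hX, rfl⟩ ⟨Y, hY, rfl⟩
    refine ⟨X + Y, hX.add hY, ?_⟩
    rw [fromBlocks_add, Matrix.mul_add, Matrix.mul_add, Matrix.add_mul, Matrix.add_mul, add_zero,
      add_add_add_comm]
  zero_mem' := ⟨0, isHermitian_zero, by simp⟩
  smul_mem' := by
    rintro k _ ⟨X, hX, rfl⟩
    refine ⟨k • X, ?_, ?_⟩
    · rw [IsHermitian, conjTranspose_smul, hX.eq, star_trivial]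
    · rw [fromBlocks_smul, smul_add, Matrix.mul_smul, Matrix.mul_smul, Matrix.smul_mul,
        Matrix.smul_mul, smul_zero]

theorem Matrix.fromBlocks_eq_conjTranspose_fromCols_mul {m : Type*} {B : Matrix n m ℂ}
    (X : Matrix n n ℂ) :
    fromBlocks (Aᴴ * X + X * A) (X * B) (Bᴴ * X) 0 =
      (fromCols 1 (0 : Matrix n m ℂ))ᴴ * X * fromCols A B +
        (fromCols A B)ᴴ * X * fromCols 1 (0 : Matrix n m ℂ) := by
  rw [conjTranspose_fromCols_eq_fromRows_conjTranspose,
    conjTranspose_fromCols_eq_fromRows_conjTranspose, Matrix.mul_assoc,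
    Matrix.mul_assoc, mul_fromCols X, mul_fromCols X, fromRows_mul_fromCols,
    fromRows_mul_fromCols, fromBlocks_add]
  simp [add_comm]

theorem Matrix.trace_eq_sum_star_dotProduct_mulVec {r ι : Type*} [Fintype r] [DecidableEq r]
    [Fintype ι] (M : Matrix r r ℂ) (b : OrthonormalBasis ι ℂ (EuclideanSpace ℂ r)) :
    M.trace = ∑ k, star (b k).ofLp ⬝ᵥ M *ᵥ (b k).ofLp := by
  have h1 : M.trace = LinearMap.trace ℂ _ (toEuclideanLin M) := by
    rw [toEuclideanLin_eq_toLin_orthonormal, LinearMap.trace_eq_matrix_trace ℂ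
      (EuclideanSpace.basisFun r ℂ).toBasis, LinearMap.toMatrix_toLin]
  rw [h1, LinearMap.trace_eq_sum_inner _ b]
  refine Finset.sum_congr rfl fun k _ => ?_
  rw [EuclideanSpace.inner_eq_star_dotProduct, ofLp_toLpLin, toLin'_apply, dotProduct_comm]

open scoped MatrixOrder in
theorem Matrix.exists_isHermitian_posDef_neg_fromBlocks [DecidableEq m]
    (hA : ∀ μ ∈ spectrum ℂ A, μ.re < 0)
    (hG : ∀ ω : ℝ, ((C * (((ω : ℂ) * Complex.I) • (1 : Matrix n n ℂ) - A)⁻¹ * B + D) +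
        (C * (((ω : ℂ) * Complex.I) • (1 : Matrix n n ℂ) - A)⁻¹ * B + D)ᴴ).PosDef)
    (hD : (D + Dᴴ).PosDef) :
    ∃ X : Matrix n n ℂ, X.IsHermitian ∧
      (-fromBlocks (Aᴴ * X + X * A) (X * B - Cᴴ) (Bᴴ * X - C) (-(D + Dᴴ))).PosDef := by
  by_contra! hcon
  set Θ : Matrix (n ⊕ m) (n ⊕ m) ℂ := fromBlocks 0 (-Cᴴ) (-C) (-(D + Dᴴ)) with hΘdef
  have hΘ : Θ.IsHermitian := by
    refine IsHermitian.fromBlocks isHermitian_zero (by simp) hD.isHermitian.neg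
  obtain ⟨W, hW, hW0, hWS, hWΘ⟩ := exists_posSemidef_of_forall_not_posDef hΘ
    (lyapunovSubmodule A B)
    (by
      rintro _ ⟨X, hX, rfl⟩
      refine IsHermitian.fromBlocks ?_ (by simp [hX.eq]) isHermitian_zero
      simp [IsHermitian, hX.eq, add_comm])
    (by
      rintro _ ⟨X, hX, rfl⟩
      convert hcon X hX using 3
      rw [hΘdef, fromBlocks_add]
      simp [sub_eq_add_neg, add_comm])
  obtain ⟨R, hR⟩ := CStarAlgebra.nonneg_iff_eq_star_mul_self.mp hW.nonneg
  set F := Rᴴ with hFdef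
  replace hR : W = F * Fᴴ := by rw [hR, hFdef, conjTranspose_conjTranspose]; rfl
  set J := fromCols (1 : Matrix n n ℂ) (0 : Matrix n m ℂ)
  set K := fromCols A B
  have htr : ∀ M, (W * M).trace = (Fᴴ * M * F).trace := fun M => by
    rw [hR, Matrix.mul_assoc, trace_mul_comm, Matrix.mul_assoc]
  have hskew : (K * F) * (J * F)ᴴ + (J * F) * (K * F)ᴴ = 0 := by
    refine mul_conjTranspose_add_eq_zero fun X hX => ?_
    rw [← hWS _ ⟨X, hX, rfl⟩, htr, fromBlocks_eq_conjTranspose_fromCols_mul, mul_add, add_mul]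
    simp only [conjTranspose_mul, Matrix.mul_assoc, J, K]
  obtain ⟨b, μ, hb⟩ := exists_orthonormalBasis_mulVec_eq_smul_mulVec
    (M := K * F + J * F) (N := K * F - J * F) (by
      rw [conjTranspose_add, conjTranspose_sub, Matrix.add_mul, Matrix.mul_add,
        Matrix.mul_add, Matrix.sub_mul, Matrix.mul_sub, Matrix.mul_sub]
      have h1 : (J * F) * (K * F)ᴴ = -((K * F) * (J * F)ᴴ) := by
        rw [eq_neg_iff_add_eq_zero, add_comm]; exact hskew
      rw [h1]
      abel)
  have hneg : ∀ k, F *ᵥ (b k).ofLp ≠ 0 →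
      (star (F *ᵥ (b k).ofLp) ⬝ᵥ Θ *ᵥ (F *ᵥ (b k).ofLp)).re < 0 := by
    intro k hk
    have hsplit : F *ᵥ (b k).ofLp =
        Sum.elim ((F *ᵥ (b k).ofLp) ∘ Sum.inl) ((F *ᵥ (b k).ofLp) ∘ Sum.inr) :=
      (Sum.elim_comp_inl_inr _).symm
    obtain ⟨hμ, hbk⟩ := hb k
    rw [add_mulVec, sub_mulVec, ← mulVec_mulVec, ← mulVec_mulVec] at hbk
    rw [hsplit] at hk hbk ⊢
    simp only [J, K, fromCols_mulVec_sumElim, one_mulVec, zero_mulVec, add_zero] at hbk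
    exact re_star_dotProduct_fromBlocks_mulVec_neg hA hG hD hμ hbk hk
  have hsum : (W * Θ).trace.re =
      ∑ k, (star (F *ᵥ (b k).ofLp) ⬝ᵥ Θ *ᵥ (F *ᵥ (b k).ofLp)).re := by
    rw [htr, trace_eq_sum_star_dotProduct_mulVec _ b, Complex.re_sum]
    refine Finset.sum_congr rfl fun k _ => ?_
    rw [star_mulVec, ← dotProduct_mulVec, mulVec_mulVec, mulVec_mulVec, Matrix.mul_assoc]
  have hzero : ∀ k, F *ᵥ (b k).ofLp = 0 := by
    by_contra! hne
    obtain ⟨k, hk⟩ := hne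
    refine hWΘ.not_gt (hsum ▸ Finset.sum_neg' (fun i _ => ?_) ⟨k, Finset.mem_univ k, hneg k hk⟩)
    by_cases hi : F *ᵥ (b i).ofLp = 0
    · simp [hi]
    · exact (hneg i hi).le
  have hlin : toEuclideanLin F = 0 := b.toBasis.ext fun k => by
    ext i
    simpa using congrFun (hzero k) i
  have hF : F = 0 := by simpa using hlin
  exact hW0 (by rw [hR, hF, Matrix.zero_mul])

theorem Matrix.posDef_of_posDef_neg_fromBlocks (hA : ∀ μ ∈ spectrum ℂ A, μ.re < 0)
    {X : Matrix n n ℂ}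
    (h : (-fromBlocks (Aᴴ * X + X * A) (X * B - Cᴴ) (Bᴴ * X - C) (-(D + Dᴴ))).PosDef) (ω : ℝ) :
    ((C * (((ω : ℂ) * Complex.I) • (1 : Matrix n n ℂ) - A)⁻¹ * B + D) +
        (C * (((ω : ℂ) * Complex.I) • (1 : Matrix n n ℂ) - A)⁻¹ * B + D)ᴴ).PosDef := by
  refine PosDef.of_dotProduct_mulVec_pos (isHermitian_add_transpose_self _) fun u hu => ?_
  set s := (ω : ℂ) * Complex.I with hs
  have hsre : 0 ≤ s.re := by simp [hs]
  set x := (s • (1 : Matrix n n ℂ) - A)⁻¹ *ᵥ (B *ᵥ u) with hx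
  have hxu : A *ᵥ x + B *ᵥ u = s • x := (eq_resolvent_mulVec hA hsre).mpr hx
  have hf : Sum.elim x u ≠ 0 := fun h0 => hu (by
    ext i; exact congrFun h0 (Sum.inr i))
  have hpos := h.dotProduct_mulVec_pos hf
  have hsplit : fromBlocks (Aᴴ * X + X * A) (X * B - Cᴴ) (Bᴴ * X - C) (-(D + Dᴴ)) =
      fromBlocks 0 (-Cᴴ) (-C) (-(D + Dᴴ)) +
        fromBlocks (Aᴴ * X + X * A) (X * B) (Bᴴ * X) 0 := by
    rw [fromBlocks_add]
    simp [sub_eq_add_neg, add_comm]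
  have hL : star (Sum.elim x u) ⬝ᵥ
      fromBlocks (Aᴴ * X + X * A) (X * B) (Bᴴ * X) 0 *ᵥ Sum.elim x u = 0 := by
    rw [fromBlocks_eq_conjTranspose_fromCols_mul, add_mulVec, dotProduct_add,
      ← mulVec_mulVec, ← mulVec_mulVec, ← mulVec_mulVec, ← mulVec_mulVec,
      dotProduct_mulVec, dotProduct_mulVec _ (fromCols A B)ᴴ, ← star_mulVec, ← star_mulVec,
      fromCols_mulVec_sumElim, fromCols_mulVec_sumElim, hxu]
    simp [mulVec_smul, hs]
  rw [neg_mulVec, dotProduct_neg, hsplit, add_mulVec, dotProduct_add, hL, add_zero,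
    star_dotProduct_fromBlocks_mulVec_of_mulVec_add_eq_smul hA hsre hxu, neg_neg] at hpos
  exact hpos

end KalmanYakubovichPopov

open Filter Topology in
theorem spectrum.tendsto_pow_zero_of_spectralRadius_lt_one {R : Type*} [NormedRing R]
    [NormedAlgebra ℂ R] [CompleteSpace R] {a : R} (h : spectralRadius ℂ a < 1) :
    Tendsto (fun k : ℕ => a ^ k) atTop (𝓝 0) := by
  obtain ⟨r, hr, hr1⟩ := ENNReal.lt_iff_exists_nnreal_btwn.mp h
  have hr1' : r < 1 := by exact_mod_cast hr1
  have hev := (spectrum.pow_nnnorm_pow_one_div_tendsto_nhds_spectralRadius a).eventually_lt_const hr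
  rw [tendsto_zero_iff_norm_tendsto_zero]
  refine squeeze_zero' (Eventually.of_forall fun _ => norm_nonneg _) ?_
    (tendsto_pow_atTop_nhds_zero_of_lt_one r.coe_nonneg (by exact_mod_cast hr1'))
  filter_upwards [hev, eventually_gt_atTop 0] with k hk hk0
  have hk' : (0 : ℝ) < k := by exact_mod_cast hk0
  rw [one_div, ENNReal.rpow_inv_lt_iff hk', ENNReal.rpow_natCast] at hk
  exact_mod_cast hk.le

section Lyapunov

variable {n : Type*} [Fintype n] [DecidableEq n] {A X : Matrix n n ℂ}

open Filter Topology in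
theorem Matrix.tendsto_pow_zero_of_spectrum_norm_lt_one {T : Matrix n n ℂ}
    (h : ∀ μ ∈ spectrum ℂ T, ‖μ‖ < 1) : Tendsto (fun k : ℕ => T ^ k) atTop (𝓝 0) := by
  let := Matrix.linftyOpNormedRing (n := n) (α := ℂ)
  let := Matrix.linftyOpNormedAlgebra (n := n) (R := ℂ) (α := ℂ)
  cases isEmpty_or_nonempty n
  · simp [Subsingleton.elim _ (0 : Matrix n n ℂ)]
  refine spectrum.tendsto_pow_zero_of_spectralRadius_lt_one ?_
  have := spectrum.spectralRadius_lt_of_forall_lt_of_nonempty (r := 1)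
    (spectrum.nonempty_of_isAlgClosed_of_finiteDimensional ℂ T) fun μ hμ => by
    exact_mod_cast h μ hμ
  exact_mod_cast this

theorem Matrix.spectrum_cayley_norm_lt_one (hA : ∀ μ ∈ spectrum ℂ A, μ.re < 0)
    (hunit : IsUnit (1 - A)) : ∀ μ ∈ spectrum ℂ ((1 + A) * (1 - A)⁻¹), ‖μ‖ < 1 := by
  have hdet := (isUnit_iff_isUnit_det _).mp hunit
  intro μ hμ
  have hnot : ¬ IsUnit (algebraMap ℂ (Matrix n n ℂ) μ - (1 + A) * (1 - A)⁻¹) := hμ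
  have hfactor : (algebraMap ℂ (Matrix n n ℂ) μ - (1 + A) * (1 - A)⁻¹) * (1 - A) =
      (μ - 1) • 1 - (μ + 1) • A := by
    rw [Matrix.sub_mul, Matrix.mul_assoc, nonsing_inv_mul _ hdet, Algebra.algebraMap_eq_smul_one,
      Matrix.smul_mul, Matrix.one_mul, Matrix.mul_one]
    module
  have hnot' : ¬ IsUnit ((μ - 1) • (1 : Matrix n n ℂ) - (μ + 1) • A) := by
    rw [← hfactor]
    exact fun h => hnot (isUnit_of_mul_isUnit_left h)
  rcases eq_or_ne μ (-1) with rfl | hμ1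
  · refine absurd ?_ hnot'
    rw [neg_add_cancel, zero_smul, sub_zero]
    exact isUnit_one.smul (Units.mk0 (-1 - 1 : ℂ) (by norm_num))
  · have hne : μ + 1 ≠ 0 := fun h => hμ1 (eq_neg_of_add_eq_zero_left h)
    have hmem : (μ - 1) / (μ + 1) ∈ spectrum ℂ A := by
      rw [spectrum.mem_iff, Algebra.algebraMap_eq_smul_one]
      intro h
      refine hnot' ?_
      convert h.smul (Units.mk0 _ hne) using 1
      rw [Units.smul_mk0, smul_sub, smul_smul, mul_div_cancel₀ _ hne]
    have hre := hA _ hmem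
    have hns : 0 < Complex.normSq (μ + 1) := Complex.normSq_pos.mpr hne
    rw [Complex.div_re, ← add_div, div_neg_iff] at hre
    simp only [Complex.add_re, Complex.sub_re, Complex.one_re, Complex.add_im, Complex.sub_im,
        Complex.one_im] at hre
    have h1 : Complex.normSq μ < 1 := by
      rw [Complex.normSq_apply]
      rcases hre with h | h <;> linarith [h.1, h.2]
    rw [Complex.normSq_eq_norm_sq] at h1
    exact (sq_lt_one_iff₀ (norm_nonneg _)).mp h1

open Filter Topology in
theorem Matrix.PosDef.of_lyapunov (hA : ∀ μ ∈ spectrum ℂ A, μ.re < 0) (hX : X.IsHermitian)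
    (h : (-(Aᴴ * X + X * A)).PosDef) : X.PosDef := by
  have hunit : IsUnit (1 - A) := by
    by_contra hnot
    have := hA 1 (by rwa [spectrum.mem_iff, map_one])
    norm_num at this
  have hdet := (isUnit_iff_isUnit_det _).mp hunit
  obtain ⟨T, hTdef⟩ : ∃ T, T = (1 + A) * (1 - A)⁻¹ := ⟨_, rfl⟩
  have hT : T * (1 - A) = 1 + A := by
    rw [hTdef, Matrix.mul_assoc, nonsing_inv_mul _ hdet, Matrix.mul_one]
  have hpow := tendsto_pow_zero_of_spectrum_norm_lt_one (spectrum_cayley_norm_lt_one hA hunit)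
  rw [← hTdef] at hpow
  have hstein : (X - Tᴴ * X * T).PosDef := by
    have hcong : (1 - A)ᴴ * (X - Tᴴ * X * T) * (1 - A) = (2 : ℂ) • -(Aᴴ * X + X * A) := by
      have : (1 - A)ᴴ * (X - Tᴴ * X * T) * (1 - A) =
          (1 - A)ᴴ * X * (1 - A) - (T * (1 - A))ᴴ * X * (T * (1 - A)) := by
        rw [conjTranspose_mul, Matrix.mul_sub _ X, Matrix.sub_mul _ _ (1 - A)]
        simp only [Matrix.mul_assoc]
      rw [this, hT, conjTranspose_sub, conjTranspose_add, conjTranspose_one, two_smul]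
      noncomm_ring
    rw [← IsUnit.posDef_star_left_conjugate_iff hunit, star_eq_conjTranspose, hcong]
    exact h.smul (by norm_num)
  set q : (n → ℂ) → ℝ := fun v => (star v ⬝ᵥ X *ᵥ v).re with hq
  have hstep : ∀ v, q v - q (T *ᵥ v) = (star v ⬝ᵥ (X - Tᴴ * X * T) *ᵥ v).re := by
    intro v
    simp only [hq]
    rw [sub_mulVec, dotProduct_sub, Complex.sub_re, star_mulVec, ← dotProduct_mulVec,
      mulVec_mulVec, mulVec_mulVec]
  have hanti : ∀ v, Antitone fun k : ℕ => q (T ^ k *ᵥ v) := by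
    intro v
    refine antitone_nat_of_succ_le fun k => ?_
    have := hstein.posSemidef.re_dotProduct_nonneg (T ^ k *ᵥ v)
    rw [RCLike.re_to_complex, ← hstep, mulVec_mulVec, ← pow_succ'] at this
    linarith
  have hnonneg : ∀ v, 0 ≤ q v := by
    intro v
    have hcont : Continuous fun M : Matrix n n ℂ => q (M *ᵥ v) := by
      simp only [hq]
      fun_prop
    have hlim : Tendsto (fun k : ℕ => q (T ^ k *ᵥ v)) atTop (𝓝 0) := by
      have := (hcont.tendsto 0).comp hpow
      simpa [hq, Function.comp_def] using this
    simpa using (hanti v).le_of_tendsto hlim 0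
  refine PosDef.of_dotProduct_mulVec_pos hX fun v hv => ?_
  rw [Complex.pos_iff]
  refine ⟨?_, (hX.im_star_dotProduct_mulVec_self v).symm⟩
  have h1 := hstein.re_dotProduct_pos hv
  rw [RCLike.re_to_complex, ← hstep] at h1
  have h2 := hnonneg (T *ᵥ v)
  change 0 < q v
  linarith

end Lyapunov

/-- Sectored real lemma: for a stable minimal realization and `α ∈ (0, π/2]`, the
frequency-domain phase bound `Φ∞(G) < α` holds if and only if an associated linear
matrix inequality has a positive definite Hermitian solution. -/
theorem sectored_real_lemma {n m : ℕ}
    (A : Matrix (Fin n) (Fin n) ℝ) (B : Matrix (Fin n) (Fin m) ℝ)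
    (C : Matrix (Fin m) (Fin n) ℝ) (D : Matrix (Fin m) (Fin m) ℝ)
    (hA : IsHurwitz A)
    (hctrb : (ctrbMatrix A B).rank = n)
    (hobsv : (ctrbMatrix A.transpose C.transpose).rank = n)
    (α : ℝ) (hα : α ∈ Set.Ioc 0 (π / 2)) :
    ((∀ ω : ℝ,
        (Complex.exp ((↑(π / 2 - α) : ℂ) * Complex.I) •
            transferFunction A B C D ((ω : ℂ) * Complex.I) +
          star (Complex.exp ((↑(π / 2 - α) : ℂ) * Complex.I)) •
            (transferFunction A B C D ((ω : ℂ) * Complex.I)).conjTranspose).PosDef) ∧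
      (Complex.exp ((↑(π / 2 - α) : ℂ) * Complex.I) • D.map Complex.ofReal +
        star (Complex.exp ((↑(π / 2 - α) : ℂ) * Complex.I)) •
          D.transpose.map Complex.ofReal).PosDef) ↔
    ∃ X : Matrix (Fin n) (Fin n) ℂ, X.IsHermitian ∧ X.PosDef ∧
      (-Matrix.fromBlocks
          ((A.map Complex.ofReal).transpose * X + X * A.map Complex.ofReal)
          (X * B.map Complex.ofReal -
            star (Complex.exp ((↑(π / 2 - α) : ℂ) * Complex.I)) •
              (C.map Complex.ofReal).transpose)
          ((B.map Complex.ofReal).transpose * X -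
            Complex.exp ((↑(π / 2 - α) : ℂ) * Complex.I) • C.map Complex.ofReal)
          (-(Complex.exp ((↑(π / 2 - α) : ℂ) * Complex.I) • D.map Complex.ofReal +
            star (Complex.exp ((↑(π / 2 - α) : ℂ) * Complex.I)) •
              D.transpose.map Complex.ofReal))).PosDef := by
  have hmap : ∀ {k l : ℕ} (M : Matrix (Fin k) (Fin l) ℝ),
      (M.map Complex.ofReal).transpose = (M.map Complex.ofReal).conjTranspose := fun M => by
    ext i j
    simp
  generalize Complex.exp ((↑(π / 2 - α) : ℂ) * Complex.I) = e
  have hG : ∀ s : ℂ, e • transferFunction A B C D s + star e • (transferFunction A B C D s)ᴴ =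
      ((e • C.map Complex.ofReal) *
          (s • (1 : Matrix (Fin n) (Fin n) ℂ) - A.map Complex.ofReal)⁻¹ *
          B.map Complex.ofReal + e • D.map Complex.ofReal) +
        ((e • C.map Complex.ofReal) *
          (s • (1 : Matrix (Fin n) (Fin n) ℂ) - A.map Complex.ofReal)⁻¹ *
          B.map Complex.ofReal + e • D.map Complex.ofReal)ᴴ := by
    intro s
    rw [← conjTranspose_smul, transferFunction, smul_add, Matrix.smul_mul, Matrix.smul_mul]
  simp only [hG]
  rw [transpose_map, hmap A, hmap B, hmap C, hmap D]
  simp only [← conjTranspose_smul]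
  constructor
  · rintro ⟨hfreq, hinf⟩
    obtain ⟨X, hX, hlmi⟩ := exists_isHermitian_posDef_neg_fromBlocks hA hfreq hinf
    refine ⟨X, hX, PosDef.of_lyapunov hA hX ?_, hlmi⟩
    exact hlmi.submatrix (e := Sum.inl) Sum.inl_injective
  · rintro ⟨X, -, -, hlmi⟩
    refine ⟨posDef_of_posDef_neg_fromBlocks hA hlmi, ?_⟩
    have h := hlmi.submatrix (e := Sum.inr) Sum.inr_injective
    rwa [fromBlocks_neg, neg_neg] at h
end
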